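/- arXiv:2510.13469 — 2 statements merged into one kernel-verified Lean document; each statement's English description precedes it below -/
import Mathlib

section
/- Assume n = 3 and σ ≡ 1 (mod 2). Then for every k ≥ 2, every k×k matrix C with entries in the maximal order 𝔪 = I(λ) is a sum of squares of k×k matrices with entries in 𝔪. -/
/-!
Matrices over the maximal order `I(λ)` in a cyclic division algebra of degree `n = 3`
over `ℚ` are sums of squares, provided `σ ≡ 1 (mod 2)`.
-/

set_option synthInstance.maxHeartbeats 1000000

noncomputable section

/-- `ζ = e^{2πi/p}`, a primitive `p`-th root of unity in `ℂ`. -/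
def zetaC (p : ℕ) : ℂ := Complex.exp (2 * Real.pi * Complex.I / p)

/-- The Gaussian period `η_s = ∑_{r=0}^{h-1} ζ^{g^{nr+s}}`. -/
def gaussPeriod (n p h g : ℕ) (s : ℕ) : ℂ :=
  ∑ r ∈ Finset.range h, zetaC p ^ (g ^ (n * r + s))

/-- `Z = ℚ(η)`, the subfield of `ℂ` generated over `ℚ` by the Gaussian period `η = η₀`. -/
def Zf (n p h g : ℕ) : IntermediateField ℚ ℂ :=
  IntermediateField.adjoin ℚ {gaussPeriod n p h g 0}

/-- `η` as an element of `Z = ℚ(η)`. -/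
def etaZ (n p h g : ℕ) : Zf n p h g :=
  ⟨gaussPeriod n p h g 0, IntermediateField.subset_adjoin ℚ _ rfl⟩

/-- `D(z) = diag(z, S(z), …, S^{n-1}(z))` in `M_n(Z)`. -/
def Dm (n p h g : ℕ) (S : Zf n p h g ≃ₐ[ℚ] Zf n p h g) (z : Zf n p h g) :
    Matrix (Fin n) (Fin n) (Zf n p h g) :=
  Matrix.diagonal fun i => (S ^ (i : ℕ)) z

/-- The matrix `U` with `U_{i+1,i} = 1`, `U_{1,n} = σ`, and `0` elsewhere
(indices written `0`-based). -/
def Um (n p h g : ℕ) (σ : ℕ) : Matrix (Fin n) (Fin n) (Zf n p h g) :=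
  Matrix.of fun i j =>
    if (i : ℕ) = (j : ℕ) + 1 then 1
    else if (i : ℕ) = 0 ∧ (j : ℕ) = n - 1 then (σ : Zf n p h g) else 0

/-- `Y = (1/p)·(λ·I − U)·D(α)` with `α = β^{n-1}`. -/
def Ym (n p h g σ : ℕ) (lam : ℤ) (S : Zf n p h g ≃ₐ[ℚ] Zf n p h g) (β : Zf n p h g) :
    Matrix (Fin n) (Fin n) (Zf n p h g) :=
  ((p : Zf n p h g)⁻¹) •
    (((lam : Zf n p h g) • (1 : Matrix (Fin n) (Fin n) (Zf n p h g)) - Um n p h g σ) *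
      Dm n p h g S (β ^ (n - 1)))

/-- The maximal order `I(λ)`: all `ℤ`-linear combinations of the `n²` matrices
`Y^i · D(η_s)`, `0 ≤ i, s ≤ n-1`. -/
def Iorder (n p h g σ : ℕ) (lam : ℤ) (S : Zf n p h g ≃ₐ[ℚ] Zf n p h g) (β : Zf n p h g) :
    Set (Matrix (Fin n) (Fin n) (Zf n p h g)) :=
  { M | ∃ c : Fin n → Fin n → ℤ,
      M = ∑ i : Fin n, ∑ s : Fin n,
        c i s • (Ym n p h g σ lam S β ^ (i : ℕ) *
          Dm n p h g S ((S ^ (s : ℕ)) (etaZ n p h g))) }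


namespace SOS

def Gsq {T : Type*} [Ring T] (R : AddSubgroup T) (k : ℕ) :
    AddSubmonoid (Matrix (Fin k) (Fin k) T) :=
  AddSubmonoid.closure {M | ∃ A : Matrix (Fin k) (Fin k) T, (∀ i j, A i j ∈ R) ∧ M = A ^ 2}

section
variable {T : Type*} [Ring T] (R : AddSubgroup T) (k : ℕ)

theorem single_mem {a : T} (ha : a ∈ R) (i j i' j' : Fin k) :
    Matrix.single i j a i' j' ∈ R := by
  rw [Matrix.single_apply]; split_ifs
  · exact ha
  · exact R.zero_mem

theorem sq_mem_G {A : Matrix (Fin k) (Fin k) T} (h : ∀ i j, A i j ∈ R) : A ^ 2 ∈ Gsq R k :=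
  AddSubmonoid.subset_closure ⟨A, h, rfl⟩

theorem sq_diag {a : T} (ha : a ∈ R) (i : Fin k) : Matrix.single i i (a ^ 2) ∈ Gsq R k := by
  have := sq_mem_G R k (A := Matrix.single i i a) (fun _ _ => single_mem R k ha _ _ _ _)
  simpa [sq] using this

theorem bc_diag {b c : T} (hb : b ∈ R) (hc : c ∈ R) {i j : Fin k} (hij : i ≠ j) :
    Matrix.single i i (b * c) + Matrix.single j j (c * b) ∈ Gsq R k := by
  have := sq_mem_G R k (A := Matrix.single i j b + Matrix.single j i c)
    (fun _ _ => R.add_mem (single_mem R k hb _ _ _ _) (single_mem R k hc _ _ _ _))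
  simpa [sq, add_mul, mul_add, hij, hij.symm, add_comm] using this

variable (h1 : (1 : T) ∈ R)
include h1

theorem neg_one_diag {i j : Fin k} (hij : i ≠ j) :
    Matrix.single i i (-1 : T) + Matrix.single j j (-1) ∈ Gsq R k := by
  simpa using bc_diag R k h1 (R.neg_mem h1) hij

theorem same_diag {a : T} (ha : a ∈ R) {i j : Fin k} (hij : i ≠ j) :
    Matrix.single i i a + Matrix.single j j a ∈ Gsq R k := by
  simpa using bc_diag R k ha h1 hij

theorem one_diag (i : Fin k) : Matrix.single i i (1 : T) ∈ Gsq R k := by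
  simpa using sq_diag R k h1 i

theorem offdiag {a : T} (ha : a ∈ R) {i j : Fin k} (hij : i ≠ j) :
    Matrix.single i j a ∈ Gsq R k := by
  have := sq_mem_G R k (A := Matrix.single i j a + Matrix.single j j 1)
    (fun _ _ => R.add_mem (single_mem R k ha _ _ _ _) (single_mem R k h1 _ _ _ _))
  have h2 := add_mem (add_mem this (one_diag R k h1 i)) (neg_one_diag R k h1 hij)
  convert h2 using 1
  simp [sq, add_mul, mul_add, hij, hij.symm, ← Matrix.single_neg]

theorem pm_diag {x : T} (hx : x ∈ R) {i j : Fin k} (hij : i ≠ j) :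
    Matrix.single i i (-x) + Matrix.single j j x ∈ Gsq R k := by
  have e : (Matrix.single i i (-x) + Matrix.single i j x + Matrix.single j i (-x-1)
      + Matrix.single j j (x+1)) ^ 2 = (Matrix.single i i (-x) + Matrix.single i j x + Matrix.single j i (-x-1)
      + Matrix.single j j (x+1)) := by
    have hij' := hij.symm
    simp only [sq, add_mul, mul_add, Matrix.single_mul_single_same, ne_eq, hij, hij', not_false_eq_true,
      Matrix.single_mul_single_of_ne, add_zero, zero_add]
    simp only [← Matrix.single_add, mul_sub, sub_mul, mul_add, add_mul, sub_eq_add_neg, neg_mul, mul_neg, mul_one, one_mul]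
    ext a b
    simp only [Matrix.add_apply, Matrix.single_apply]
    split_ifs <;> simp_all <;> abel
  have := sq_mem_G R k (A := (Matrix.single i i (-x) + Matrix.single i j x + Matrix.single j i (-x-1)
      + Matrix.single j j (x+1)))
    (fun _ _ => R.add_mem (R.add_mem (R.add_mem (single_mem R k (R.neg_mem hx) _ _ _ _)
     (single_mem R k hx _ _ _ _)) (single_mem R k (R.sub_mem (R.neg_mem hx) h1) _ _ _ _))
      (single_mem R k (R.add_mem hx h1) _ _ _ _))
  rw [e] at this
  have h2 := add_mem (add_mem this (add_mem (neg_one_diag R k h1 hij) (one_diag R k h1 i)))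
    (add_mem (offdiag R k h1 (R.neg_mem hx) hij)
      (offdiag R k h1 (R.add_mem hx h1) hij.symm))
  convert h2 using 1
  ext a b
  simp only [Matrix.add_apply, Matrix.single_apply]
  split_ifs <;> simp_all

end

/-- elements whose diagonal units are all sums of squares -/
def Qs {T : Type*} [Ring T] (R : AddSubgroup T) (k : ℕ) : AddSubmonoid T where
  carrier := {x | ∀ i : Fin k, Matrix.single i i x ∈ Gsq R k}
  add_mem' {a b} ha hb i := by
    rw [Matrix.single_add]; exact add_mem (ha i) (hb i)
  zero_mem' i := by simp

theorem exists_ne {k : ℕ} (hk : 2 ≤ k) (i : Fin k) : ∃ j : Fin k, i ≠ j := by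
  have : Nontrivial (Fin k) := Fin.nontrivial_iff_two_le.2 hk
  obtain ⟨j, hj⟩ := _root_.exists_ne i
  exact ⟨j, hj.symm⟩

section
variable {T : Type*} [Ring T] (R : AddSubgroup T) (k : ℕ) (hk : 2 ≤ k) (h1 : (1 : T) ∈ R)

theorem Q_sq {a : T} (ha : a ∈ R) : a ^ 2 ∈ Qs R k := fun i => sq_diag R k ha i

include hk h1
theorem Q_two {a : T} (ha : a ∈ R) : a + a ∈ Qs R k := fun i => by
  obtain ⟨j, hij⟩ := exists_ne hk i
  have := add_mem (same_diag R k h1 ha hij) (pm_diag R k h1 (R.neg_mem ha) hij)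
  convert this using 1
  ext a b
  simp only [Matrix.add_apply, Matrix.single_apply]
  split_ifs <;> simp_all

theorem Q_comm {b c : T} (hb : b ∈ R) (hc : c ∈ R) (hcb : c * b ∈ R) :
    b * c - c * b ∈ Qs R k := fun i => by
  obtain ⟨j, hij⟩ := exists_ne hk i
  have := add_mem (bc_diag R k hb hc hij) (same_diag R k h1 (R.neg_mem hcb) hij)
  convert this using 1
  ext a b
  simp only [Matrix.add_apply, Matrix.single_apply]
  split_ifs <;> simp_all [sub_eq_add_neg]

theorem main_sos (hQ : ∀ x ∈ R, x ∈ Qs R k) (C : Matrix (Fin k) (Fin k) T)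
    (hC : ∀ i j, C i j ∈ R) :
    ∃ (m : ℕ) (A : Fin m → Matrix (Fin k) (Fin k) T),
      (∀ t i j, A t i j ∈ R) ∧ C = ∑ t, A t ^ 2 := by
  have : C ∈ Gsq R k := by
    rw [Matrix.matrix_eq_sum_single C]
    refine sum_mem fun i _ => sum_mem fun j _ => ?_
    by_cases h : i = j
    · subst h; exact hQ _ (hC _ _) i
    · exact offdiag R k h1 (hC _ _) h
  obtain ⟨l, hl, hs⟩ := AddSubmonoid.exists_list_of_mem_closure this
  have hl' : ∀ t : Fin l.length, ∃ A : Matrix (Fin k) (Fin k) T,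
      (∀ i j, A i j ∈ R) ∧ l.get t = A ^ 2 := fun t => hl _ (List.get_mem l t)
  choose A hA hA2 using hl'
  refine ⟨l.length, A, hA, ?_⟩
  rw [← hs, ← Finset.sum_congr rfl (fun t _ => hA2 t)]
  simp [Fin.sum_univ_getElem]
end
end SOS

namespace SOS
section
variable {K M : Type*} [CommRing K] [Ring M] (D : K →+* M) (S : K →+* K) (U Y : M)
  (L : Subring K) (R : AddSubgroup M) (p : ℕ) (l : ℤ) (α α' : K) (η : Fin 3 → K)

theorem abstract_main (hp : Odd p)
    (hcan : ∀ x y : M, p • x = p • y → x = y)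
    (hSL : ∀ z ∈ L, S z ∈ L)
    (hDU : ∀ z ∈ L, D z * U = U * D (S z))
    (hα : α ∈ L) (hα' : α' ∈ L) (hαα : α * α' = p * p)
    (hY : p • Y = ((l : M) - U) * D α)
    (hsq : ∀ z ∈ L, ∃ w ∈ L, ∃ y ∈ L, z = w ^ 2 + 2 * y)
    (hη : ∀ s, η s ∈ L)
    (hd1 : ∑ s, (η s - S (η s)) * η s = p)
    (hd2 : ∑ s, (η s - S (S (η s))) * η s = p)
    (hYR : ∀ i : Fin 3, ∀ z ∈ L, Y ^ (i : ℕ) * D z ∈ R)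
    (hRY : ∀ x ∈ R, ∃ z : Fin 3 → K, (∀ i, z i ∈ L) ∧ x = ∑ i : Fin 3, Y ^ (i : ℕ) * D (z i))
    (k : ℕ) (hk : 2 ≤ k) (C : Matrix (Fin k) (Fin k) M)
    (hC : ∀ i j, C i j ∈ R) :
    ∃ (m : ℕ) (A : Fin m → Matrix (Fin k) (Fin k) M),
      (∀ t i j, A t i j ∈ R) ∧ C = ∑ t, A t ^ 2 := by
  have hD : ∀ z ∈ L, D z ∈ R := fun z hz => by simpa using hYR 0 z hz
  have hY1R : ∀ z ∈ L, Y * D z ∈ R := fun z hz => by simpa using hYR 1 z hz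
  have hY2R : ∀ z ∈ L, Y ^ 2 * D z ∈ R := fun z hz => by simpa using hYR 2 z hz
  have h1 : (1 : M) ∈ R := by simpa using hD 1 L.one_mem
  have hDp : ∀ (m : ℕ) z, m • D z = D (m * z) := fun m z => by simp
  have hY' : p • Y = D (l * α) - U * D α := by rw [hY, sub_mul, map_mul, map_intCast]
  have hY1 : ∀ w, p • (Y * D w) = D (l * α * w) - U * D (α * w) := by
    intro w
    rw [← smul_mul_assoc, hY', sub_mul, mul_assoc, ← map_mul, ← map_mul]
  have hlα : (l * α : K) ∈ L := L.mul_mem (intCast_mem L l) hα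
  have hDU2 : ∀ z ∈ L, D z * U ^ 2 = U ^ 2 * D (S (S z)) := by
    intro z hz
    rw [sq, ← mul_assoc, hDU z hz, mul_assoc, hDU _ (hSL z hz), mul_assoc]
  have hY2 : ∀ w, p • p • (Y ^ 2 * D w) = D (l * α * (l * α) * w)
      - U * D (l * (α + S α) * α * w) + U ^ 2 * D (S α * α * w) := by
    intro w
    have e : p • p • (Y ^ 2) = (p • Y) * (p • Y) := by
      rw [smul_mul_smul_comm, sq, smul_smul]
    have e2 : p • p • (Y ^ 2 * D w) = (p • p • (Y ^ 2)) * D w := by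
      rw [smul_mul_assoc, smul_mul_assoc]
    have e3 : D (l * α) * (U * D α) = U * D (l * S α * α) := by
      rw [← mul_assoc, hDU _ hlα, mul_assoc, ← map_mul, map_mul S, map_intCast]
    have e4 : U * D α * (U * D α) = U ^ 2 * D (S α * α) := by
      rw [mul_assoc, ← mul_assoc (D α), hDU _ hα, mul_assoc, ← map_mul, sq, mul_assoc]
    have e5 : U * D α * D (l * α) = U * D (l * α * α) := by
      rw [mul_assoc, ← map_mul]; congr 2; ring
    rw [e2, e, hY', sub_mul, mul_sub, mul_sub, e3, e4, e5, ← map_mul]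
    have e6 : D (l * (α + S α) * α * w) = (D (l * S α * α) + D (l * α * α)) * D w := by
      rw [← map_add, ← map_mul]; congr 1; ring
    rw [e6, map_mul D (S α * α), map_mul D (l * α * (l * α))]
    noncomm_ring
  -- membership in R
  have hUR : ∀ z ∈ L, p • (U * D z) ∈ R := by
    intro z hz
    have e : p • (U * D z) = D (l * p * z) - Y * D (α' * z) := by
      apply hcan
      rw [smul_sub, hY1, hDp, show l * α * (α' * z) = p * (l * p * z) by
        linear_combination (l * z) * hαα, show α * (α' * z) = p * (p * z) by
        linear_combination (z) * hαα, ← hDp p (p * z), ← hDp p z, mul_smul_comm, mul_smul_comm]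
      abel
    rw [e]
    exact R.sub_mem (hD _ (L.mul_mem (L.mul_mem (intCast_mem L l) (natCast_mem L p)) hz))
      (hY1R _ (L.mul_mem hα' hz))
  have hSα : S α * S α' = p * p := by rw [← map_mul, hαα, map_mul, map_natCast]
  have hU2R : ∀ z ∈ L, p • p • p • (U ^ 2 * D z) ∈ R := by
    intro z hz
    have e : p • p • (U ^ 2 * D z) = Y ^ 2 * D (α' * S α' * z) - D (l * l * α * S α' * z)
        + U * D (l * (α + S α) * S α' * z) := by
      apply hcan
      apply hcan
      rw [smul_add, smul_sub, smul_add, smul_sub, hY2, hDp, hDp,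
        show l * α * (l * α) * (α' * S α' * z) = p * (p * (l * l * α * S α' * z)) by
          linear_combination (l * l * α * S α' * z) * hαα,
        show l * (α + S α) * α * (α' * S α' * z) = p * (p * (l * (α + S α) * S α' * z)) by
          linear_combination (l * (α + S α) * S α' * z) * hαα,
        show S α * α * (α' * S α' * z) = p * (p * (p * (p * z))) by
          linear_combination (S α * S α' * z) * hαα + (p * p * z) * hSα]
      simp only [← hDp, mul_smul_comm]
      abel
    rw [e, smul_add, smul_sub]
    have hl := intCast_mem L l
    refine R.add_mem (R.sub_mem (R.nsmul_mem (hY2R _ ?_) _) (R.nsmul_mem (hD _ ?_) _)) (hUR _ ?_)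
    · exact L.mul_mem (L.mul_mem hα' (hSL _ hα')) hz
    · exact L.mul_mem (L.mul_mem (L.mul_mem (L.mul_mem hl hl) hα) (hSL _ hα')) hz
    · exact L.mul_mem (L.mul_mem (L.mul_mem hl (L.add_mem hα (hSL _ hα))) (hSL _ hα')) hz
  -- membership in Q
  have QD : ∀ z ∈ L, D z ∈ Qs R k := by
    intro z hz
    obtain ⟨w, hw, y, hy, rfl⟩ := hsq z hz
    rw [two_mul, map_add, map_add, map_pow]
    exact add_mem (Q_sq R k (hD w hw)) (Q_two R k hk h1 (hD y hy))
  have QU : ∀ z ∈ L, p • p • (U * D z) ∈ Qs R k := by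
    intro z hz
    have e : p • p • (U * D z) = ∑ s, (D (η s) * (p • (U * D (-(η s * z)))) -
        (p • (U * D (-(η s * z)))) * D (η s)) := by
      have : ∀ s, (D (η s) * (p • (U * D (-(η s * z)))) -
        (p • (U * D (-(η s * z)))) * D (η s)) = p • (U * D ((η s - S (η s)) * η s * z)) := by
        intro s
        rw [mul_smul_comm, ← mul_assoc, hDU _ (hη s), smul_mul_assoc, mul_assoc, mul_assoc,
          ← map_mul, ← map_mul, ← smul_sub, ← mul_sub, ← map_sub]
        congr 3; ring
      rw [Finset.sum_congr rfl (fun s _ => this s), ← Finset.smul_sum, ← Finset.mul_sum,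
        ← map_sum, ← Finset.sum_mul, hd1, ← hDp, mul_smul_comm]
    rw [e]
    refine sum_mem fun s _ => Q_comm R k hk h1 (hD _ (hη s))
      (hUR _ (L.neg_mem (L.mul_mem (hη s) hz))) ?_
    rw [smul_mul_assoc, mul_assoc, ← map_mul]
    exact hUR _ (L.mul_mem (L.neg_mem (L.mul_mem (hη s) hz)) (hη s))
  have QU2 : ∀ z ∈ L, p • p • p • p • (U ^ 2 * D z) ∈ Qs R k := by
    intro z hz
    have e : p • p • p • p • (U ^ 2 * D z) = ∑ s, (D (η s) * (p • p • p • (U ^ 2 * D (-(η s * z)))) -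
        (p • p • p • (U ^ 2 * D (-(η s * z)))) * D (η s)) := by
      have : ∀ s, (D (η s) * (p • p • p • (U ^ 2 * D (-(η s * z)))) -
        (p • p • p • (U ^ 2 * D (-(η s * z)))) * D (η s)) =
          p • p • p • (U ^ 2 * D ((η s - S (S (η s))) * η s * z)) := by
        intro s
        rw [mul_smul_comm, mul_smul_comm, mul_smul_comm, ← mul_assoc, hDU2 _ (hη s),
          smul_mul_assoc, smul_mul_assoc, smul_mul_assoc, mul_assoc, mul_assoc,
          ← map_mul, ← map_mul, ← smul_sub, ← smul_sub, ← smul_sub, ← mul_sub, ← map_sub]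
        congr 5; ring
      rw [Finset.sum_congr rfl (fun s _ => this s), ← Finset.smul_sum, ← Finset.smul_sum,
        ← Finset.smul_sum, ← Finset.mul_sum,
        ← map_sum, ← Finset.sum_mul, hd2, ← hDp, mul_smul_comm]
    rw [e]
    refine sum_mem fun s _ => Q_comm R k hk h1 (hD _ (hη s))
      (hU2R _ (L.neg_mem (L.mul_mem (hη s) hz))) ?_
    rw [smul_mul_assoc, smul_mul_assoc, smul_mul_assoc, mul_assoc, ← map_mul]
    exact hU2R _ (L.mul_mem (L.neg_mem (L.mul_mem (hη s) hz)) (hη s))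
  have Qodd : ∀ x ∈ R, p • x ∈ Qs R k → x ∈ Qs R k := by
    intro x hx hq
    obtain ⟨m, hm⟩ := hp
    have := add_mem hq (Q_two R k hk h1 (R.neg_mem (R.nsmul_mem hx m)))
    convert this using 1
    rw [hm, add_smul, mul_smul, two_smul, one_smul]
    abel
  have QY1 : ∀ z ∈ L, Y * D z ∈ Qs R k := by
    intro z hz
    have hm := hY1R z hz
    apply Qodd _ hm
    apply Qodd _ (R.nsmul_mem hm _)
    apply Qodd _ (R.nsmul_mem (R.nsmul_mem hm _) _)
    rw [hY1, smul_sub, smul_sub, sub_eq_add_neg, ← smul_neg, ← smul_neg, ← mul_neg, ← map_neg]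
    exact add_mem (nsmul_mem (nsmul_mem (QD _ (L.mul_mem hlα hz)) _) _)
      (QU _ (L.neg_mem (L.mul_mem hα hz)))
  have QY2 : ∀ z ∈ L, Y ^ 2 * D z ∈ Qs R k := by
    intro z hz
    have hm := hY2R z hz
    have m1 := R.nsmul_mem hm p
    have m2 := R.nsmul_mem m1 p
    have m3 := R.nsmul_mem m2 p
    have m4 := R.nsmul_mem m3 p
    have m5 := R.nsmul_mem m4 p
    apply Qodd _ hm
    apply Qodd _ m1
    apply Qodd _ m2
    apply Qodd _ m3
    apply Qodd _ m4
    apply Qodd _ m5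
    rw [hY2, sub_eq_add_neg, ← mul_neg, ← map_neg]
    simp only [smul_add]
    have hl := intCast_mem L l
    refine add_mem (add_mem ?_ ?_) (QU2 _ ?_)
    · exact nsmul_mem (nsmul_mem (nsmul_mem (nsmul_mem (QD _ (L.mul_mem (L.mul_mem hlα hlα) hz)) _) _) _) _
    · refine nsmul_mem (nsmul_mem (QU _ (L.neg_mem ?_)) _) _
      exact L.mul_mem (L.mul_mem (L.mul_mem hl (L.add_mem hα (hSL _ hα))) hα) hz
    · exact L.mul_mem (L.mul_mem (hSL _ hα) hα) hz
  refine main_sos R k hk h1 (fun x hx => ?_) C hC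
  obtain ⟨z, hz, rfl⟩ := hRY x hx
  rw [Fin.sum_univ_three]
  refine add_mem (add_mem ?_ ?_) ?_
  · simpa using QD _ (hz 0)
  · simpa using QY1 _ (hz 1)
  · simpa using QY2 _ (hz 2)
end
end SOS
namespace SOS

section
variable (p h g : ℕ) [Fact p.Prime]

/-- evaluation of the group ring at the root of unity -/
def phi : AddMonoidAlgebra ℤ (ZMod p) →ₐ[ℤ] ℂ :=
  AddMonoidAlgebra.lift ℤ ℂ (ZMod p) (ZMod.stdAddChar (N := p)).toMonoidHom

def mu (c : ZMod p) : AddMonoidAlgebra ℤ (ZMod p) →+* AddMonoidAlgebra ℤ (ZMod p) :=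
  AddMonoidAlgebra.mapDomainRingHom ℤ (AddMonoidHom.mulLeft c)

theorem phi_single (a : ZMod p) (b : ℤ) :
    phi p (AddMonoidAlgebra.single a b) = b * ZMod.stdAddChar a := by
  simp [phi]

theorem mu_single (c a : ZMod p) (b : ℤ) :
    mu p c (AddMonoidAlgebra.single a b) = AddMonoidAlgebra.single (c * a) b := by
  simp [mu]

theorem mu_coeff {c : ZMod p} (hc : c ≠ 0) (f : AddMonoidAlgebra ℤ (ZMod p)) (a : ZMod p) :
    (mu p c f).coeff (c * a) = f.coeff a := by
  have : Function.Injective (fun x : ZMod p => c * x) := mul_right_injective₀ hc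
  exact Finsupp.mapDomain_apply this f.coeff a

theorem mu_mu (c d : ZMod p) (f : AddMonoidAlgebra ℤ (ZMod p)) :
    mu p c (mu p d f) = mu p (c * d) f := by
  induction f using AddMonoidAlgebra.induction_linear with
  | zero => simp
  | add f g hf hg => simp [hf, hg]
  | single a b => simp [mu_single, mul_assoc]

theorem mu_one (f : AddMonoidAlgebra ℤ (ZMod p)) : mu p 1 f = f := by
  induction f using AddMonoidAlgebra.induction_linear with
  | zero => simp
  | add f g hf hg => simp [hf, hg]
  | single a b => simp [mu_single]

theorem frob (f : AddMonoidAlgebra ℤ (ZMod p)) : ∃ y, f ^ 2 = mu p 2 f + 2 * y := by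
  induction f using AddMonoidAlgebra.induction_linear with
  | zero => exact ⟨0, by simp⟩
  | add f g hf hg =>
    obtain ⟨y, hy⟩ := hf
    obtain ⟨z, hz⟩ := hg
    exact ⟨y + z + f * g, by rw [map_add]; linear_combination hy + hz⟩
  | single a b =>
    obtain ⟨c, hc⟩ : ∃ c, b * b = b + 2 * c := by
      obtain ⟨c, hc⟩ := Int.even_mul_pred_self b
      exact ⟨c, by linear_combination hc⟩
    refine ⟨AddMonoidAlgebra.single (2 * a) c, ?_⟩
    rw [sq, AddMonoidAlgebra.single_mul_single, mu_single, hc, two_mul, two_mul, two_mul,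
      ← AddMonoidAlgebra.single_add, ← AddMonoidAlgebra.single_add]

def Inv : Subring (AddMonoidAlgebra ℤ (ZMod p)) :=
  RingHom.eqLocus (mu p ((g : ZMod p) ^ 3)) (RingHom.id _)

theorem mem_Inv {f} : f ∈ Inv p g ↔ mu p ((g : ZMod p) ^ 3) f = f := Iff.rfl

theorem two_cancel {f y : AddMonoidAlgebra ℤ (ZMod p)} (h : 2 * f = 2 * y) : f = y := by
  rw [two_mul, two_mul] at h
  ext a
  have := congrArg (fun z => z.coeff a) h
  simp at this
  omega

theorem inv_sq (hp2 : p ≠ 2) {f} (hf : f ∈ Inv p g) :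
    ∃ w ∈ Inv p g, ∃ y ∈ Inv p g, f = w ^ 2 + 2 * y := by
  have h2 : (2 : ZMod p) ≠ 0 := by
    have : ((2 : ℕ) : ZMod p) ≠ 0 := by
      rw [Ne, ZMod.natCast_eq_zero_iff]
      intro h
      exact hp2 ((Nat.prime_dvd_prime_iff_eq Fact.out Nat.prime_two).1 h)
    simpa using this
  have hw : mu p (2⁻¹) f ∈ Inv p g := by
    rw [mem_Inv] at *
    rw [mu_mu, mul_comm, ← mu_mu, hf]
  obtain ⟨y, hy⟩ := frob p (mu p (2⁻¹) f)
  rw [mu_mu, mul_inv_cancel₀ h2, mu_one] at hy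
  refine ⟨_, hw, -y, ?_, by linear_combination -hy⟩
  apply neg_mem
  rw [mem_Inv]
  apply two_cancel
  have e : 2 * y = (mu p (2⁻¹) f)^2 - f := by linear_combination -hy
  have := (Inv p g).sub_mem ((Inv p g).pow_mem hw 2) hf
  rw [← e, mem_Inv, map_mul, map_ofNat] at this
  exact this

variable (hph : p = 3 * h + 1) (hg : orderOf (g : ZMod p) = p - 1)

@[to_additive]
theorem prod_range_three {M : Type*} [CommMonoid M] (F : ℕ → M) (h : ℕ) :
    ∏ t ∈ Finset.range (3 * h), F t = ∏ s ∈ Finset.range 3, ∏ r ∈ Finset.range h, F (3 * r + s) := by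
  rw [Finset.prod_comm]
  induction h with
  | zero => simp
  | succ h ih =>
    rw [Finset.prod_range_succ, ← ih, mul_add, Finset.prod_range_add]

include hg in
theorem gne : (g : ZMod p) ≠ 0 := by
  intro h0
  have h1 : 2 ≤ p := (Fact.out : p.Prime).two_le
  rw [h0] at hg
  have := orderOf_zero (M₀ := ZMod p)
  have h3 : p = 1 := by omega
  omega

include hg in
theorem image_pow : (Finset.range (p - 1)).image (fun t => (g : ZMod p) ^ t) =
    Finset.univ.erase 0 := by
  apply Finset.eq_of_subset_of_card_le
  · intro x hx
    obtain ⟨t, _, rfl⟩ := Finset.mem_image.1 hx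
    simp [gne p g hg]
  · rw [Finset.card_image_of_injOn]
    · simp [ZMod.card]
    · have := pow_injOn_Iio_orderOf (x := (g : ZMod p))
      rw [hg] at this
      intro a ha b hb hab
      exact this (by simpa using ha) (by simpa using hb) hab

include hph hg in
@[to_additive]
theorem prod_nz {M : Type*} [CommMonoid M] (F : ZMod p → M) :
    ∏ a ∈ Finset.univ.erase (0 : ZMod p), F a =
      ∏ s ∈ Finset.range 3, ∏ r ∈ Finset.range h, F ((g : ZMod p) ^ (3 * r + s)) := by
  rw [← prod_range_three (fun t => F ((g : ZMod p) ^ t)), ← image_pow p g hg, Finset.prod_image]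
  · congr 2; omega
  · have := pow_injOn_Iio_orderOf (x := (g : ZMod p))
    rw [hg] at this
    intro a ha b hb hab
    exact this (by simpa using ha) (by simpa using hb) hab

include hph hg in
@[to_additive]
theorem prod_shift {M : Type*} [CommMonoid M] (F : ZMod p → M) (s : ℕ) :
    ∏ r ∈ Finset.range h, F ((g : ZMod p) ^ 3 * (g : ZMod p) ^ (3 * r + s)) =
      ∏ r ∈ Finset.range h, F ((g : ZMod p) ^ (3 * r + s)) := by
  have hp1 : (g : ZMod p) ^ (3 * h) = 1 := by
    rw [show 3 * h = p - 1 by omega, ← hg, pow_orderOf_eq_one]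
  obtain _ | h := h
  · simp
  · rw [Finset.prod_range_succ, Finset.prod_range_succ']
    congr 1
    · apply Finset.prod_congr rfl; intro r _; congr 1; ring
    · congr 1
      calc _ = (g : ZMod p) ^ (3 * (h + 1)) * (g : ZMod p) ^ s := by ring
        _ = _ := by rw [hp1]; simp

def ee (s : ℕ) : AddMonoidAlgebra ℤ (ZMod p) :=
  ∑ r ∈ Finset.range h, AddMonoidAlgebra.single ((g : ZMod p) ^ (3 * r + s)) 1

def bb (s : ℕ) : AddMonoidAlgebra ℤ (ZMod p) :=
  ∏ r ∈ Finset.range h, (1 - AddMonoidAlgebra.single ((g : ZMod p) ^ (3 * r + s)) 1)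

include hph hg in
theorem ee_mem (s : ℕ) : ee p h g s ∈ Inv p g := by
  rw [mem_Inv, ee, map_sum]
  simp only [mu_single]
  exact sum_shift p h g hph hg (fun a => AddMonoidAlgebra.single a (1 : ℤ)) s

include hph hg in
theorem bb_mem (s : ℕ) : bb p h g s ∈ Inv p g := by
  rw [mem_Inv, bb, map_prod]
  simp only [mu_single, map_sub, map_one]
  exact prod_shift p h g hph hg (fun a => 1 - AddMonoidAlgebra.single a (1 : ℤ)) s

theorem sum_std (b : ZMod p) : ∑ a ∈ Finset.univ.erase (0 : ZMod p), (ZMod.stdAddChar (a * b) : ℂ)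
   = (if b = 0 then (p : ℂ) else 0) - 1 := by
  have := AddChar.sum_mulShift b (ZMod.isPrimitive_stdAddChar p)
  rw [← Finset.add_sum_erase _ _ (Finset.mem_univ 0)] at this
  simp [ZMod.card] at this
  rw [← this]
  simp

theorem phi_ee (s : ℕ) : phi p (ee p h g s) =
    ∑ r ∈ Finset.range h, ZMod.stdAddChar ((g : ZMod p) ^ (3 * r + s)) := by
  simp [ee, phi_single]

theorem phi_bb (s : ℕ) : phi p (bb p h g s) =
    ∏ r ∈ Finset.range h, (1 - ZMod.stdAddChar ((g : ZMod p) ^ (3 * r + s))) := by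
  simp [bb, phi_single, map_prod]

theorem phi_eq (f : AddMonoidAlgebra ℤ (ZMod p)) :
    phi p f = ∑ a, (f.coeff a : ℂ) * ZMod.stdAddChar a := by
  induction f using AddMonoidAlgebra.induction_linear with
  | zero => simp
  | add f g hf hg => simp [hf, hg, add_mul, Finset.sum_add_distrib]
  | single a b =>
    rw [phi_single, Finset.sum_eq_single a]
    · simp
    · intro c _ hc
      simp [hc.symm]
    · simp

include hph hg in
theorem inv_span {f} (hf : f ∈ Inv p g) : ∃ c : Fin 3 → ℤ,
    phi p f = ∑ s : Fin 3, (c s : ℂ) * phi p (ee p h g s) := by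
  have hinv : ∀ r s : ℕ, f.coeff ((g : ZMod p) ^ (3 * r + s)) = f.coeff ((g : ZMod p) ^ s) := by
    intro r s
    induction r with
    | zero => simp
    | succ r ih =>
      rw [← ih]
      conv_rhs => rw [← mu_coeff p (pow_ne_zero 3 (gne p g hg)), (mem_Inv p g).1 hf]
      congr 1
      ring
  have h1 := sum_std p 1
  have h2 := sum_nz p h g hph hg (fun a => (ZMod.stdAddChar a : ℂ))
  simp only [mul_one, one_ne_zero, if_false, zero_sub] at h1
  rw [h1] at h2
  refine ⟨fun s => f.coeff ((g : ZMod p) ^ (s : ℕ)) - f.coeff 0, ?_⟩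
  rw [phi_eq, ← Finset.add_sum_erase _ _ (Finset.mem_univ 0), sum_nz p h g hph hg]
  simp only [hinv, ← Finset.mul_sum, phi_ee]
  simp only [Finset.sum_range_succ, Finset.sum_range_zero, zero_add, Fin.sum_univ_three] at h2 ⊢
  simp only [AddChar.map_zero_eq_one, Int.cast_sub, Fin.val_zero, Fin.val_one, Fin.val_two]
  linear_combination (-(f.coeff 0 : ℂ)) * h2

include hph hg in
theorem sum_shift_pow {M : Type*} [AddCommMonoid M] (F : ZMod p → M) (s t : ℕ) :
    ∑ r ∈ Finset.range h, F ((g : ZMod p) ^ (3 * t) * (g : ZMod p) ^ (3 * r + s)) =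
      ∑ r ∈ Finset.range h, F ((g : ZMod p) ^ (3 * r + s)) := by
  induction t with
  | zero => simp
  | succ t ih =>
    rw [← ih, ← sum_shift p h g hph hg (fun a => F ((g : ZMod p) ^ (3 * t) * a))]
    apply Finset.sum_congr rfl
    intro r _
    congr 1
    ring

include hph hg in
theorem corr (j : ℕ) : ∑ s ∈ Finset.range 3, phi p (ee p h g s) * phi p (ee p h g (s + j)) =
    ∑ r ∈ Finset.range h, ((if (1 : ZMod p) + (g : ZMod p) ^ (3 * r + j) = 0 then (p : ℂ) else 0) - 1) := by
  simp only [← sum_std]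
  simp only [sum_nz p h g hph hg, phi_ee]
  conv_rhs => rw [Finset.sum_comm]
  apply Finset.sum_congr rfl
  intro s _
  rw [Finset.sum_mul]
  conv_rhs => rw [Finset.sum_comm]
  apply Finset.sum_congr rfl
  intro r _
  rw [Finset.mul_sum, ← sum_shift_pow p h g hph hg
    (fun a => (ZMod.stdAddChar ((g : ZMod p) ^ (3 * r + s)) : ℂ) * ZMod.stdAddChar a) (s + j) r]
  apply Finset.sum_congr rfl
  intro t _
  rw [← AddChar.map_add_eq_mul]
  congr 1
  ring

include hph hg in
theorem neg_one_pow (hp2 : p ≠ 2) : h = 2 * (h / 2) ∧ (g : ZMod p) ^ (3 * (h / 2)) = -1 ∧ 0 < h := by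
  have hp : p.Prime := Fact.out
  have hodd := hp.eq_two_or_odd
  have h2 := hp.two_le
  have e : h = 2 * (h / 2) := by omega
  refine ⟨e, ?_, by omega⟩
  have h3 : (g : ZMod p) ^ (3 * (h / 2)) * (g : ZMod p) ^ (3 * (h / 2)) = 1 := by
    rw [← pow_add, show 3 * (h / 2) + 3 * (h / 2) = p - 1 by omega, ← hg, pow_orderOf_eq_one]
  rcases mul_self_eq_one_iff.1 h3 with h4 | h4
  · have := orderOf_dvd_of_pow_eq_one h4
    rw [hg] at this
    have := Nat.le_of_dvd (by omega) this
    omega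
  · exact h4

include hph hg in
theorem neg_one_iff (hp2 : p ≠ 2) (j r : ℕ) (hj : j < 3) (hr : r < h) :
    (1 : ZMod p) + (g : ZMod p) ^ (3 * r + j) = 0 ↔ (j = 0 ∧ r = h / 2) := by
  obtain ⟨e, h1, h0⟩ := neg_one_pow p h g hph hg hp2
  constructor
  · intro hh
    have h2 : (g : ZMod p) ^ (3 * r + j) = (g : ZMod p) ^ (3 * (h / 2)) := by
      rw [h1]; linear_combination hh
    have := pow_injOn_Iio_orderOf (x := (g : ZMod p))
    rw [hg] at this
    have := this (by simp; omega) (by simp; omega) h2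
    omega
  · rintro ⟨rfl, rfl⟩
    simp [h1]

include hph hg in
theorem corr0 (hp2 : p ≠ 2) : ∑ s ∈ Finset.range 3, phi p (ee p h g s) * phi p (ee p h g s) = p - h := by
  have := corr p h g hph hg 0
  simp only [add_zero] at this
  rw [this, Finset.sum_sub_distrib]
  obtain ⟨e, h1, h0⟩ := neg_one_pow p h g hph hg hp2
  rw [Finset.sum_eq_single (h / 2)]
  · have := (neg_one_iff p h g hph hg hp2 0 (h/2) (by omega) (by omega)).2 ⟨rfl, rfl⟩
    rw [add_zero] at this
    rw [if_pos this]; simp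
  · intro r hr hne
    rw [if_neg]
    intro hh
    exact hne ((neg_one_iff p h g hph hg hp2 0 r (by omega) (Finset.mem_range.1 hr)).1 hh).2
  · intro hh
    exact absurd (Finset.mem_range.2 (by omega)) hh

include hph hg in
theorem corrj (hp2 : p ≠ 2) (j : ℕ) (hj : j < 3) (hj0 : j ≠ 0) :
    ∑ s ∈ Finset.range 3, phi p (ee p h g s) * phi p (ee p h g (s + j)) = - h := by
  rw [corr p h g hph hg j, Finset.sum_sub_distrib, Finset.sum_eq_zero]
  · simp
  · intro r hr
    rw [if_neg]
    intro hh
    exact hj0 ((neg_one_iff p h g hph hg hp2 j r hj (Finset.mem_range.1 hr)).1 hh).1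

theorem std_nat (m : ℕ) : (ZMod.stdAddChar (m : ZMod p) : ℂ) =
    Complex.exp (2 * Real.pi * Complex.I / p) ^ m := by
  have := ZMod.stdAddChar_coe (N := p) (m : ℤ)
  rw [Int.cast_natCast] at this
  rw [this, ← Complex.exp_nat_mul]
  congr 1
  push_cast
  ring

theorem prod_all : ∏ a ∈ Finset.univ.erase (0 : ZMod p), ((1 : ℂ) - ZMod.stdAddChar a) = p := by
  have hp : p.Prime := Fact.out
  have h2 := hp.two_le
  have hpr := Complex.isPrimitiveRoot_exp p hp.ne_zero
  obtain ⟨q, hq⟩ : ∃ q, p = q + 1 := ⟨p - 1, by omega⟩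
  have hinj : Set.InjOn (fun k : ℕ => ((k + 1 : ℕ) : ZMod p)) (Finset.range q : Set ℕ) := by
    intro a ha b hb hab
    simp only [Finset.coe_range, Set.mem_Iio] at ha hb
    have := (ZMod.natCast_eq_natCast_iff' _ _ _).1 hab
    rw [Nat.mod_eq_of_lt (by omega), Nat.mod_eq_of_lt (by omega)] at this
    omega
  have him : (Finset.range q).image (fun k : ℕ => ((k + 1 : ℕ) : ZMod p)) = Finset.univ.erase 0 := by
    apply Finset.eq_of_subset_of_card_le
    · intro x hx
      obtain ⟨t, ht, rfl⟩ := Finset.mem_image.1 hx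
      rw [Finset.mem_erase, Ne, ZMod.natCast_eq_zero_iff]
      refine ⟨fun hd => ?_, Finset.mem_univ _⟩
      have := Nat.le_of_dvd (by omega) hd
      have := Finset.mem_range.1 ht
      omega
    · rw [Finset.card_image_of_injOn hinj]
      simp [ZMod.card]
      omega
  rw [← him, Finset.prod_image hinj]
  simp only [std_nat]
  have h3 : IsPrimitiveRoot (Complex.exp (2 * Real.pi * Complex.I / p)) (q + 1) := by
    rw [← hq]; exact hpr
  rw [h3.prod_one_sub_pow_eq_order, hq]
  push_cast; rfl

include hph hg in
theorem bb_prod : phi p (bb p h g 0) * phi p (bb p h g 1 * bb p h g 2) = p := by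
  rw [map_mul, ← prod_all p, prod_nz p h g hph hg]
  simp only [phi_bb, Finset.prod_range_succ, Finset.prod_range_zero, one_mul, mul_assoc]

end
end SOS

namespace SOS

section
variable (p h g : ℕ) [Fact p.Prime]

theorem period_eq (s : ℕ) : gaussPeriod 3 p h g s = phi p (ee p h g s) := by
  rw [phi_ee, gaussPeriod]
  apply Finset.sum_congr rfl
  intro r _
  rw [zetaC, ← std_nat]
  push_cast
  rfl

def LL : Subring (Zf 3 p h g) :=
  ((Inv p g).map (phi p : AddMonoidAlgebra ℤ (ZMod p) →+* ℂ)).comap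
    (algebraMap (Zf 3 p h g) ℂ)

theorem mem_LL {z : Zf 3 p h g} : z ∈ LL p h g ↔ ∃ f ∈ Inv p g, phi p f = (z : ℂ) := Iff.rfl

variable (S : Zf 3 p h g ≃ₐ[ℚ] Zf 3 p h g)

theorem Dm_add (x y : Zf 3 p h g) : Dm 3 p h g S (x + y) = Dm 3 p h g S x + Dm 3 p h g S y := by
  simp [Dm]

def DR : Zf 3 p h g →+* Matrix (Fin 3) (Fin 3) (Zf 3 p h g) where
  toFun := Dm 3 p h g S
  map_zero' := by simp [Dm]
  map_one' := by simp [Dm]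
  map_add' := Dm_add p h g S
  map_mul' x y := by simp [Dm]

def RR (σ : ℕ) (lam : ℤ) (β : Zf 3 p h g) :
    AddSubgroup (Matrix (Fin 3) (Fin 3) (Zf 3 p h g)) where
  carrier := Iorder 3 p h g σ lam S β
  zero_mem' := ⟨0, by simp⟩
  add_mem' := by
    rintro _ _ ⟨c, rfl⟩ ⟨d, rfl⟩
    refine ⟨c + d, ?_⟩
    simp only [Pi.add_apply, add_smul, Finset.sum_add_distrib]
  neg_mem' := by
    rintro _ ⟨c, rfl⟩
    refine ⟨-c, ?_⟩
    simp only [Pi.neg_apply, neg_smul, Finset.sum_neg_distrib]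

theorem DU (σ : ℕ) (z : Zf 3 p h g) (hz : S (S (S z)) = z) :
    Dm 3 p h g S z * Um 3 p h g σ = Um 3 p h g σ * Dm 3 p h g S (S z) := by
  ext1 i j
  rw [Dm, Dm, Matrix.diagonal_mul, Matrix.mul_diagonal]
  fin_cases i <;> fin_cases j <;> simp [Um, pow_succ, hz, mul_comm]

theorem pY (σ : ℕ) (lam : ℤ) (β : Zf 3 p h g) :
    p • Ym 3 p h g σ lam S β =
      ((lam : Matrix (Fin 3) (Fin 3) (Zf 3 p h g)) - Um 3 p h g σ) * DR p h g S (β ^ 2) := by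
  have hp : (p : Zf 3 p h g) ≠ 0 := Nat.cast_ne_zero.2 (Fact.out : p.Prime).ne_zero
  rw [Ym, ← Nat.cast_smul_eq_nsmul (Zf 3 p h g), smul_smul, mul_inv_cancel₀ hp, one_smul]
  congr 2
  rw [Int.cast_smul_eq_zsmul, zsmul_one]

end
end SOS

/-- If `n = 3` and `σ ≡ 1 (mod 2)`, then for every `k ≥ 2` every `k × k`
matrix with entries in the maximal order `𝔪 = I(λ)` is a sum of squares of `k × k`
matrices with entries in `𝔪`. -/
theorem matrices_over_maximal_order_deg_three_sum_of_squares
    (n p h g σ : ℕ) (lam : ℤ)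
    (hn3 : n = 3)
    (hp : p.Prime)
    (hph : p = n * h + 1)
    (hg : orderOf (g : ZMod p) = p - 1)
    (hσfac : ∃ qs : Finset ℕ, 2 ≤ qs.card ∧
      (∀ q ∈ qs, q.Prime ∧ ¬ ∃ x : ZMod p, x ^ n = (q : ZMod p)) ∧ σ = ∏ q ∈ qs, q)
    (hσres : ∃ x : ZMod p, x ^ n = (σ : ZMod p))
    (hσcop : Nat.Coprime σ p)
    (hlam : (lam : ZMod p) ^ n = (σ : ZMod p))
    (S : Zf n p h g ≃ₐ[ℚ] Zf n p h g)
    (hS : ∀ s : ℕ, (((S ^ s) (etaZ n p h g) : Zf n p h g) : ℂ) = gaussPeriod n p h g s)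
    (β : Zf n p h g)
    (hβ : (β : ℂ) = ∏ r ∈ Finset.range h, (1 - zetaC p ^ (g ^ (n * r))))
    (hσodd : σ % 2 = 1)
    (k : ℕ) (hk : 2 ≤ k)
    (C : Matrix (Fin k) (Fin k) (Matrix (Fin n) (Fin n) (Zf n p h g)))
    (hC : ∀ i j, C i j ∈ Iorder n p h g σ lam S β) :
    ∃ (m : ℕ) (A : Fin m → Matrix (Fin k) (Fin k) (Matrix (Fin n) (Fin n) (Zf n p h g))),
      (∀ t i j, A t i j ∈ Iorder n p h g σ lam S β) ∧ C = ∑ t, A t ^ 2 := by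
  subst hn3
  haveI : Fact p.Prime := ⟨hp⟩
  have hp2 : p ≠ 2 := by omega
  have hodd : Odd p := hp.odd_of_ne_two hp2
  have hco : ∀ s : ℕ, (((S ^ s) (etaZ 3 p h g) : Zf 3 p h g) : ℂ) = SOS.phi p (SOS.ee p h g s) :=
    fun s => by rw [hS, SOS.period_eq]
  have hηL : ∀ s : ℕ, (S ^ s) (etaZ 3 p h g) ∈ SOS.LL p h g := fun s =>
    (SOS.mem_LL p h g).2 ⟨_, SOS.ee_mem p h g hph hg s, (hco s).symm⟩
  have hlift : ∀ f ∈ SOS.Inv p g, ∃ c : Fin 3 → ℤ, SOS.phi p f =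
      ((∑ s : Fin 3, c s • (S ^ (s : ℕ)) (etaZ 3 p h g) : Zf 3 p h g) : ℂ) := by
    intro f hf
    obtain ⟨c, hc⟩ := SOS.inv_span p h g hph hg hf
    refine ⟨c, ?_⟩
    rw [hc, Fin.sum_univ_three, Fin.sum_univ_three]
    push_cast
    simp only [zsmul_eq_mul, hco]
  have hspan : ∀ z ∈ SOS.LL p h g, ∃ c : Fin 3 → ℤ,
      z = ∑ s : Fin 3, c s • (S ^ (s : ℕ)) (etaZ 3 p h g) := by
    intro z hz
    obtain ⟨f, hf, e⟩ := (SOS.mem_LL p h g).1 hz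
    obtain ⟨c, hc⟩ := hlift f hf
    exact ⟨c, Subtype.ext (e.symm.trans hc)⟩
  have hlift' : ∀ f ∈ SOS.Inv p g, ∃ z ∈ SOS.LL p h g, (z : ℂ) = SOS.phi p f := by
    intro f hf
    obtain ⟨c, hc⟩ := hlift f hf
    exact ⟨_, (SOS.mem_LL p h g).2 ⟨f, hf, hc⟩, hc.symm⟩
  have hSs : ∀ s : ℕ, S ((S ^ s) (etaZ 3 p h g)) = (S ^ (s + 1)) (etaZ 3 p h g) := fun s => by
    rw [pow_succ', AlgEquiv.mul_apply]
  have hper : ∀ s : ℕ, (S ^ (s + 3)) (etaZ 3 p h g) = (S ^ s) (etaZ 3 p h g) := by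
    intro s
    apply Subtype.ext
    rw [hco, hco, SOS.phi_ee, SOS.phi_ee, ← SOS.sum_shift p h g hph hg _ s]
    apply Finset.sum_congr rfl
    intro r _
    congr 1
    ring
  have hSL : ∀ z ∈ SOS.LL p h g, S z ∈ SOS.LL p h g := by
    intro z hz
    obtain ⟨c, rfl⟩ := hspan z hz
    rw [map_sum]
    refine sum_mem fun s _ => ?_
    rw [map_zsmul, hSs]
    exact zsmul_mem (hηL _) _
  have hS3 : ∀ z ∈ SOS.LL p h g, S (S (S z)) = z := by
    intro z hz
    obtain ⟨c, rfl⟩ := hspan z hz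
    simp only [map_sum, map_zsmul, hSs, hper]
  have hβL : β ∈ SOS.LL p h g := by
    refine (SOS.mem_LL p h g).2 ⟨_, SOS.bb_mem p h g hph hg 0, ?_⟩
    rw [hβ, SOS.phi_bb]
    apply Finset.prod_congr rfl
    intro r _
    rw [zetaC, ← SOS.std_nat]
    push_cast
    rfl
  have hβbb : (β : ℂ) = SOS.phi p (SOS.bb p h g 0) := by
    rw [hβ, SOS.phi_bb]
    apply Finset.prod_congr rfl
    intro r _
    rw [zetaC, ← SOS.std_nat]
    push_cast
    rfl
  obtain ⟨β', hβ'L, hβ'⟩ := hlift' _ ((SOS.Inv p g).mul_mem (SOS.bb_mem p h g hph hg 1)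
    (SOS.bb_mem p h g hph hg 2))
  have hββ : β * β' = p := by
    apply Subtype.ext
    have := SOS.bb_prod p h g hph hg
    rw [← hβ', ← hβbb] at this
    push_cast
    exact this
  have hc0 := SOS.corr0 p h g hph hg hp2
  have hc1 := SOS.corrj p h g hph hg hp2 1 (by omega) (by omega)
  have hc2 := SOS.corrj p h g hph hg hp2 2 (by omega) (by omega)
  simp only [← hco, Finset.sum_range_succ, Finset.sum_range_zero, zero_add] at hc0 hc1 hc2
  refine SOS.abstract_main (SOS.DR p h g S) (S : Zf 3 p h g →+* Zf 3 p h g) (Um 3 p h g σ)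
    (Ym 3 p h g σ lam S β) (SOS.LL p h g) (SOS.RR p h g S σ lam β) p lam (β ^ 2) (β' ^ 2)
    (fun s => (S ^ (s : ℕ)) (etaZ 3 p h g)) hodd ?_ hSL ?_ (pow_mem hβL 2) (pow_mem hβ'L 2) ?_
    (SOS.pY p h g S σ lam β) ?_ (fun s => hηL s) ?_ ?_ ?_ ?_ k hk C hC
  · intro x y hxy
    have hp0 : (p : Zf 3 p h g) ≠ 0 := Nat.cast_ne_zero.2 hp.ne_zero
    rw [← Nat.cast_smul_eq_nsmul (Zf 3 p h g), ← Nat.cast_smul_eq_nsmul (Zf 3 p h g)] at hxy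
    exact smul_right_injective _ hp0 hxy
  · intro z hz
    exact SOS.DU p h g S σ z (hS3 z hz)
  · rw [← hββ]; ring
  · intro z hz
    obtain ⟨f, hf, e⟩ := (SOS.mem_LL p h g).1 hz
    obtain ⟨w, hw, y, hy, hwy⟩ := SOS.inv_sq p g hp2 hf
    obtain ⟨w', hw', ew⟩ := hlift' w hw
    obtain ⟨y', hy', ey⟩ := hlift' y hy
    refine ⟨w', hw', y', hy', Subtype.ext ?_⟩
    rw [two_mul, ← e, hwy, two_mul]
    push_cast
    rw [ew, ey, map_add, map_add, map_pow]
  · apply Subtype.ext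
    rw [Fin.sum_univ_three]
    push_cast
    simp only [AlgEquiv.coe_ringHom_commutes, RingHom.coe_coe, hSs, Fin.val_zero, Fin.val_one, Fin.val_two, zero_add] at hc0 hc1 ⊢
    linear_combination hc0 - hc1
  · apply Subtype.ext
    rw [Fin.sum_univ_three]
    push_cast
    simp only [RingHom.coe_coe, hSs, Fin.val_zero, Fin.val_one, Fin.val_two, zero_add] at hc0 hc2 ⊢
    linear_combination hc0 - hc2
  · intro i z hz
    obtain ⟨c, rfl⟩ := hspan z hz
    rw [map_sum, Finset.mul_sum]
    refine sum_mem fun s _ => ?_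
    rw [map_zsmul, mul_smul_comm]
    refine zsmul_mem ?_ _
    refine ⟨fun i' s' => if i' = i ∧ s' = s then 1 else 0, ?_⟩
    rw [Finset.sum_eq_single i, Finset.sum_eq_single s]
    · simp; rfl
    · intro b _ hb; simp [hb]
    · simp
    · intro b _ hb; simp [hb]
    · simp
  · rintro x ⟨c, rfl⟩
    refine ⟨fun i => ∑ s : Fin 3, c i s • (S ^ (s : ℕ)) (etaZ 3 p h g), fun i =>
      sum_mem fun s _ => zsmul_mem (hηL _) _, ?_⟩
    apply Finset.sum_congr rfl
    intro i _
    rw [map_sum, Finset.mul_sum]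
    apply Finset.sum_congr rfl
    intro s _
    rw [map_zsmul, mul_smul_comm]
    rfl

end
end

section
/- Assume σ ≡ 1 (mod 2) and N_{Z/ℚ}(η) ≡ 1 (mod 2). Then for every k ≥ 2, every k×k matrix C with entries in the maximal order 𝔪 = I(λ) is a sum of squares of k×k matrices with entries in 𝔪. -/
/-!
Matrices over the maximal order `I(λ)` in a cyclic division algebra of degree `n = 3`
over `ℚ` are sums of squares, provided `σ ≡ 1 (mod 2)`.
-/

set_option synthInstance.maxHeartbeats 1000000

noncomputable section

section core
variable {B : Type*} [Ring B]

/-- matrices with entries in `I` -/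
def entM (k : ℕ) (I : AddSubgroup B) : AddSubgroup (Matrix (Fin k) (Fin k) B) where
  carrier := {A | ∀ i j, A i j ∈ I}
  add_mem' := fun ha hb i j => I.add_mem (ha i j) (hb i j)
  zero_mem' := fun _ _ => I.zero_mem
  neg_mem' := fun ha i j => I.neg_mem (ha i j)

lemma single_mem_entM {k : ℕ} {I : AddSubgroup B} (i j : Fin k) {x : B} (hx : x ∈ I) :
    Matrix.single i j x ∈ entM k I := by
  intro a b
  rw [Matrix.single_apply]
  split_ifs
  · exact hx
  · exact I.zero_mem

/-- sums of squares -/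
def SSq (k : ℕ) (I : AddSubgroup B) : AddSubmonoid (Matrix (Fin k) (Fin k) B) :=
  AddSubmonoid.closure {M | ∃ A ∈ entM k I, M = A * A}

lemma sq_mem_SSq {k : ℕ} {I : AddSubgroup B} {A : Matrix (Fin k) (Fin k) B}
    (h : A ∈ entM k I) : A * A ∈ SSq k I := AddSubmonoid.subset_closure ⟨A, h, rfl⟩

lemma SSq_exists {k : ℕ} {I : AddSubgroup B} {C : Matrix (Fin k) (Fin k) B}
    (h : C ∈ SSq k I) : ∃ (m : ℕ) (A : Fin m → Matrix (Fin k) (Fin k) B),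
      (∀ t i j, A t i j ∈ I) ∧ C = ∑ t, A t ^ 2 := by
  induction h using AddSubmonoid.closure_induction with
  | mem x hx =>
    obtain ⟨A, hA, rfl⟩ := hx
    exact ⟨1, fun _ => A, fun _ i j => hA i j, by simp [sq]⟩
  | zero => exact ⟨0, fun _ => 0, fun t => t.elim0, by simp⟩
  | add x y _ _ hx hy =>
    obtain ⟨m, A, hA, rfl⟩ := hx
    obtain ⟨m', A', hA', rfl⟩ := hy
    refine ⟨m + m', Fin.append A A', ?_, ?_⟩
    · intro t
      refine Fin.addCases (fun t => ?_) (fun t => ?_) t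
      · simpa using hA t
      · simpa using hA' t
    · simp [Fin.sum_univ_add]

section
variable {k : ℕ} {I : AddSubgroup B} (h1 : (1 : B) ∈ I)
include h1

lemma ss_one (i : Fin k) : Matrix.single i i (1 : B) ∈ SSq k I := by
  have := sq_mem_SSq (single_mem_entM i i h1)
  simpa using this

lemma ss_neg_one {i j : Fin k} (hij : i ≠ j) : Matrix.single i i (-1 : B) ∈ SSq k I := by
  have h := sq_mem_SSq (add_mem (single_mem_entM i j h1) (single_mem_entM j i (neg_mem h1)))
  have h2 := add_mem h (ss_one h1 j)
  convert h2 using 1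
  ext a b
  simp only [add_mul, mul_add, Matrix.single_mul_single_same,
    Matrix.single_mul_single_of_ne _ _ _ _ hij, Matrix.single_mul_single_of_ne _ _ _ _ hij.symm,
    Matrix.add_apply, Matrix.single_apply, Matrix.zero_apply]
  split_ifs <;> simp_all

lemma ss_off {i j : Fin k} (hij : i ≠ j) {x : B} (hx : x ∈ I) :
    Matrix.single i j x ∈ SSq k I := by
  have h := sq_mem_SSq (add_mem (single_mem_entM i i h1) (single_mem_entM i j hx))
  have h2 := add_mem (ss_neg_one h1 hij) h
  convert h2 using 1
  simp only [add_mul, mul_add, Matrix.single_mul_single_same, Matrix.single_mul_single_of_ne _ _ _ _ hij, Matrix.single_mul_single_of_ne _ _ _ _ hij.symm, one_mul, mul_one, add_zero]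
  rw [← add_assoc, ← Matrix.single_add]; simp

lemma ss_two {i j : Fin k} (hij : i ≠ j) {x : B} (hx : x ∈ I) :
    Matrix.single i i (x + x) ∈ SSq k I := by
  have h := sq_mem_SSq (add_mem (add_mem (single_mem_entM i i (add_mem h1 hx))
    (single_mem_entM i j (neg_mem hx))) (add_mem (single_mem_entM j i hx)
      (single_mem_entM j j (neg_mem hx))))
  have h2 := add_mem (add_mem (ss_neg_one h1 hij) h)
    (add_mem (ss_off h1 hij hx) (ss_off h1 hij.symm (neg_mem hx)))
  convert h2 using 1
  ext a b
  simp only [add_mul, mul_add, Matrix.single_mul_single_same, Matrix.single_mul_single_of_ne _ _ _ _ hij, Matrix.single_mul_single_of_ne _ _ _ _ hij.symm, one_mul, mul_one, add_zero, zero_add, Matrix.add_apply, Matrix.single_apply]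
  split_ifs <;> first | noncomm_ring | (exfalso; grind) | simp

omit h1 in
lemma ss_comm2 {i j : Fin k} (hij : i ≠ j) {x y : B} (hx : x ∈ I) (hy : y ∈ I) :
    Matrix.single i i (x * y) + Matrix.single j j (y * x) ∈ SSq k I := by
  have h := sq_mem_SSq (add_mem (single_mem_entM i j hx) (single_mem_entM j i hy))
  convert h using 1
  simp [add_mul, mul_add, hij, hij.symm, add_comm]

end

/-- good elements -/
def Gd (k : ℕ) (I : AddSubgroup B) : Set B :=
  {x | x ∈ I ∧ ∀ i : Fin k, Matrix.single i i x ∈ SSq k I}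

lemma exists_ne_fin {k : ℕ} (hk : 2 ≤ k) (i : Fin k) : ∃ j : Fin k, i ≠ j := by
  haveI : Nontrivial (Fin k) := Fin.nontrivial_iff_two_le.mpr hk
  obtain ⟨j, hj⟩ := exists_ne i
  exact ⟨j, hj.symm⟩

def Gsub (k : ℕ) (hk : 2 ≤ k) (I : AddSubgroup B) (h1 : (1 : B) ∈ I) : AddSubgroup B where
  carrier := Gd k I
  add_mem' := fun ha hb => ⟨add_mem ha.1 hb.1, fun i => by
    rw [Matrix.single_add]; exact add_mem (ha.2 i) (hb.2 i)⟩
  zero_mem' := ⟨zero_mem _, fun i => by rw [Matrix.single_zero]; exact zero_mem _⟩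
  neg_mem' := fun {x} ha => ⟨neg_mem ha.1, fun i => by
    obtain ⟨j, hij⟩ := exists_ne_fin hk i
    have := add_mem (ha.2 i) (ss_two h1 hij (neg_mem ha.1))
    rw [← Matrix.single_add] at this
    have e : x + (-x + -x) = -x := by abel
    rwa [e] at this⟩

lemma two_mem_G {k : ℕ} (hk : 2 ≤ k) {I : AddSubgroup B} (h1 : (1 : B) ∈ I) {x : B}
    (hx : x ∈ I) : x + x ∈ Gsub k hk I h1 := 
  ⟨add_mem hx hx, fun i => by
    obtain ⟨j, hij⟩ := exists_ne_fin hk i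
    exact ss_two h1 hij hx⟩

lemma comm_mem_G {k : ℕ} (hk : 2 ≤ k) {I : AddSubgroup B} (h1 : (1 : B) ∈ I) {x y : B}
    (hx : x ∈ I) (hy : y ∈ I) (hxy : x * y ∈ I) (hyx : y * x ∈ I) :
    x * y - y * x ∈ Gsub k hk I h1 := 
  ⟨sub_mem hxy hyx, fun i => by
    obtain ⟨j, hij⟩ := exists_ne_fin hk i
    have h := add_mem (ss_comm2 hij hx hy) (ss_comm2 hij (neg_mem hyx) h1)
    convert h using 1
    ext a b
    simp only [mul_one, one_mul, Matrix.add_apply, Matrix.single_apply]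
    split_ifs <;> simp [sub_eq_add_neg]⟩

lemma one_mem_G {k : ℕ} (hk : 2 ≤ k) {I : AddSubgroup B} (h1 : (1 : B) ∈ I) :
    (1 : B) ∈ Gsub k hk I h1 := ⟨h1, fun i => ss_one h1 i⟩

lemma odd_mem_G {k : ℕ} (hk : 2 ≤ k) {I : AddSubgroup B} (h1 : (1 : B) ∈ I) {x : B} {q : ℤ}
    (hq : Odd q) (hx : x ∈ I) (h : q • x ∈ Gsub k hk I h1) : x ∈ Gsub k hk I h1 := by
  obtain ⟨t, rfl⟩ := hq
  have h2 := two_mem_G hk h1 (I.zsmul_mem hx t)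
  have := sub_mem h h2
  convert this using 1
  rw [add_smul, mul_smul, two_smul, one_smul]; abel

lemma all_of_G {k : ℕ} (hk : 2 ≤ k) {I : AddSubgroup B} (h1 : (1 : B) ∈ I)
    (hI : ∀ x ∈ I, x ∈ Gsub k hk I h1) (C : Matrix (Fin k) (Fin k) B) (hC : ∀ i j, C i j ∈ I) :
    C ∈ SSq k I := by
  rw [Matrix.matrix_eq_sum_single C]
  refine sum_mem fun i _ => sum_mem fun j _ => ?_
  by_cases hij : i = j
  · subst hij; exact (hI _ (hC i i)).2 i
  · exact ss_off h1 hij (hC i j)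

/-- odd saturation -/
def satO (H : AddSubgroup B) : AddSubgroup B where
  carrier := {x | ∃ q : ℤ, Odd q ∧ q • x ∈ H}
  add_mem' := by
    rintro a b ⟨q, hq, ha⟩ ⟨r, hr, hb⟩
    refine ⟨q * r, hq.mul hr, ?_⟩
    rw [smul_add]
    refine add_mem ?_ ?_
    · rw [mul_comm, mul_smul]; exact H.zsmul_mem ha r
    · rw [mul_smul]; exact H.zsmul_mem hb q
  zero_mem' := ⟨1, odd_one, by simp⟩
  neg_mem' := by
    rintro a ⟨q, hq, ha⟩
    exact ⟨q, hq, by rw [smul_neg]; exact neg_mem ha⟩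

lemma le_satO {H : AddSubgroup B} {x : B} (h : x ∈ H) : x ∈ satO H := ⟨1, odd_one, by simpa⟩

lemma satO_of_odd {H : AddSubgroup B} {x : B} {q : ℤ} (hq : Odd q) (h : q • x ∈ satO H) :
    x ∈ satO H := by
  obtain ⟨r, hr, h⟩ := h
  exact ⟨r * q, hr.mul hq, by rwa [mul_smul]⟩

lemma satO_of_oddN {H : AddSubgroup B} {x : B} {q : ℕ} (hq : Odd q) (h : (q : B) * x ∈ satO H) :
    x ∈ satO H := by
  refine satO_of_odd (q := (q : ℤ)) (by exact_mod_cast hq) ?_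
  simpa using h

lemma satO_le {H K : AddSubgroup B} (h : ∀ x ∈ H, x ∈ satO K) {x : B} (hx : x ∈ satO H) :
    x ∈ satO K := by
  obtain ⟨r, hr, hx⟩ := hx
  exact satO_of_odd hr (h _ hx)

lemma comm_mem_satG {k : ℕ} (hk : 2 ≤ k) {I : AddSubgroup B} (h1 : (1 : B) ∈ I) {x y : B}
    (hx : x ∈ satO I) (hy : y ∈ satO I) (hxy : x * y ∈ satO I) (hyx : y * x ∈ satO I) :
    x * y - y * x ∈ satO (Gsub k hk I h1) := by
  obtain ⟨a, ha, hx⟩ := hx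
  obtain ⟨b, hb, hy⟩ := hy
  obtain ⟨c, hc, hxy⟩ := hxy
  obtain ⟨d, hd, hyx⟩ := hyx
  refine ⟨(a * c) * (b * d), (ha.mul hc).mul (hb.mul hd), ?_⟩
  have := comm_mem_G hk h1 (x := (c * a) • x) (y := (d * b) • y)
    (by rw [mul_smul]; exact I.zsmul_mem hx _) (by rw [mul_smul]; exact I.zsmul_mem hy _)
    (by 
      rw [smul_mul_smul_comm, show c * a * (d * b) = (a * b * d) * c by ring, mul_smul]
      exact I.zsmul_mem hxy _) 
    (by 
      rw [smul_mul_smul_comm, show d * b * (c * a) = (a * b * c) * d by ring, mul_smul]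
      exact I.zsmul_mem hyx _)
  convert this using 1
  rw [smul_mul_smul_comm, smul_mul_smul_comm, smul_sub]
  congr 2 <;> ring

variable {Z : Type*} [CommRing Z]

/-- filtration -/
def Fil (D : Z →+* B) (O : Subring Z) (X : B) (m : ℕ) : AddSubgroup B :=
  satO (AddSubgroup.closure {x | ∃ j ≤ m, ∃ z ∈ O, x = X ^ j * D z})

variable {D : Z →+* B} {O : Subring Z}

lemma Fil_gen (X : B) {m j : ℕ} (hj : j ≤ m) {z : Z} (hz : z ∈ O) :
    X ^ j * D z ∈ Fil D O X m := le_satO (AddSubgroup.subset_closure ⟨j, hj, z, hz, rfl⟩)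

lemma Fil_map (f : B →+ B) (X : B) (m : ℕ) (K : AddSubgroup B)
    (h : ∀ j ≤ m, ∀ z ∈ O, f (X ^ j * D z) ∈ satO K) {x : B} (hx : x ∈ Fil D O X m) :
    f x ∈ satO K := by
  obtain ⟨q, hq, hx⟩ := hx
  refine satO_of_odd hq ?_
  rw [← map_zsmul]
  have : AddSubgroup.closure {x | ∃ j ≤ m, ∃ z ∈ O, x = X ^ j * D z} ≤ (satO K).comap f := by
    rw [AddSubgroup.closure_le]
    rintro _ ⟨j, hj, z, hz, rfl⟩
    exact h j hj z hz
  exact this hx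

lemma Fil_mono (X : B) {m m' : ℕ} (h : m ≤ m') {x : B} (hx : x ∈ Fil D O X m) :
    x ∈ Fil D O X m' :=
  Fil_map (AddMonoidHom.id B) X m _ (fun _ hj _ hz => Fil_gen X (hj.trans h) hz) hx

lemma Fil_right (X : B) {m : ℕ} {x : B} (hx : x ∈ Fil D O X m) {w : Z} (hw : w ∈ O) :
    x * D w ∈ Fil D O X m :=
  Fil_map (AddMonoidHom.mulRight (D w)) X m _ (fun j hj z hz => by
    have := Fil_gen (D := D) X hj (mul_mem hz hw)
    simpa [Fil, mul_assoc] using this) hx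

lemma Fil_left (X : B) {m : ℕ} {x : B} (hx : x ∈ Fil D O X m) :
    X * x ∈ Fil D O X (m + 1) :=
  Fil_map (AddMonoidHom.mulLeft X) X m _ (fun j hj z hz => by
    have := Fil_gen (D := D) X (Nat.succ_le_succ hj) hz
    simpa [Fil, pow_succ', mul_assoc] using this) hx

section
variable {S : Z →+* Z} {U Y : B} {p : ℕ} {lam : ℤ} {α γ : Z}
  (hDU : ∀ z, D z * U = U * D (S z)) (hS : ∀ z ∈ O, S z ∈ O)
  (hp : Odd p) (hY : (p : B) * Y = ((lam : B) - U) * D α) (hα : α ∈ O) (hγ : γ ∈ O)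

include hDU in
lemma DUpow (z : Z) (j : ℕ) : D z * U ^ j = U ^ j * D (S^[j] z) := by
  induction j with
  | zero => simp
  | succ j ih =>
    rw [pow_succ, ← mul_assoc, ih, mul_assoc, hDU, mul_assoc, Function.iterate_succ_apply']

include hS in
lemma S_iter (j : ℕ) {z : Z} (hz : z ∈ O) : S^[j] z ∈ O := by
  induction j with
  | zero => simpa
  | succ j ih => rw [Function.iterate_succ_apply']; exact hS _ ih

include hDU hS hp hY hα in
lemma Y_mem_FilU (j : ℕ) {z : Z} (hz : z ∈ O) : Y ^ j * D z ∈ Fil D O U j := by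
  induction j generalizing z with
  | zero => simpa using Fil_gen (D := D) U (le_refl 0) hz
  | succ j ih =>
    rw [pow_succ', mul_assoc]
    refine Fil_map (AddMonoidHom.mulLeft Y) U j _ (fun i hi w hw => ?_) (ih hz)
    refine satO_of_oddN hp ?_
    have e : (p : B) * (Y * (U ^ i * D w)) = lam • (U ^ i * D (S^[i] α * w))
        - U ^ (i + 1) * D (S^[i] α * w) := by
      rw [← mul_assoc, hY, mul_assoc, ← mul_assoc (D α), DUpow hDU, map_mul, sub_mul,
        pow_succ', zsmul_eq_mul]
      simp only [mul_assoc]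
    simp only [AddMonoidHom.coe_mulLeft]
    rw [e]
    have hm := mul_mem (S_iter hS i hα) hw
    exact sub_mem (zsmul_mem (Fil_gen U (hi.trans (Nat.le_succ j)) hm) _)
      (Fil_gen U (Nat.succ_le_succ hi) hm)

include hDU hY in
lemma pDY (z : Z) : (p : B) * (D z * Y) = (p : B) * (Y * D (S z)) + lam • D ((z - S z) * α) := by
  have h1 : (p : B) * (D z * Y) = D z * ((p : B) * Y) := by
    rw [← mul_assoc, ← mul_assoc, (Nat.cast_commute p (D z)).eq]
  rw [h1, ← mul_assoc (p : B), hY, ← mul_assoc (D z), mul_sub, hDU, zsmul_eq_mul,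
    ← (Int.cast_commute lam (D z)).eq]
  have e : D α * D (S z) = D (S z) * D α := by rw [← map_mul, ← map_mul, mul_comm]
  rw [mul_assoc _ (D α), e]
  simp only [map_mul, map_sub]
  noncomm_ring

include hDU hS hp hY hα in
lemma DY_mem_FilY (j : ℕ) {w z : Z} (hw : w ∈ O) (hz : z ∈ O) :
    D w * (Y ^ j * D z) ∈ Fil D O Y j := by
  induction j generalizing w with
  | zero =>
    have := Fil_gen (D := D) Y (le_refl 0) (mul_mem hw hz)
    simpa using this
  | succ j ih =>
    refine satO_of_oddN hp ?_
    have e : (p : B) * (D w * (Y ^ (j + 1) * D z)) =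
        (p : B) * (Y * (D (S w) * (Y ^ j * D z)))
        + lam • (D ((w - S w) * α) * (Y ^ j * D z)) := by
      have := congrArg (· * (Y ^ j * D z)) (pDY hDU hY w)
      simp only [add_mul, smul_mul_assoc, mul_assoc] at this
      rw [← this, pow_succ']; simp only [mul_assoc]
    rw [e]
    refine add_mem ?_ (zsmul_mem (Fil_mono Y (Nat.le_succ j) 
      (ih (mul_mem (sub_mem hw (hS _ hw)) hα))) _)
    rw [← nsmul_eq_mul]
    exact nsmul_mem (Fil_left Y (ih (hS _ hw))) _

include hDU hS hp hY hα hγ in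
lemma U_mem_FilY {q : ℕ} (hq : Odd q) (hαγ : α * γ = q) (j : ℕ) {z : Z} (hz : z ∈ O) :
    U ^ j * D z ∈ Fil D O Y j := by
  induction j generalizing z with
  | zero => simpa using Fil_gen (D := D) Y (le_refl 0) hz
  | succ j ih =>
    rw [pow_succ', mul_assoc]
    refine Fil_map (AddMonoidHom.mulLeft U) Y j _ (fun i hi w hw => ?_) (ih hz)
    refine satO_of_oddN hq ?_
    have e0 : (q : B) * U = (lam * q : ℤ) - (p : B) * Y * D γ := by
      rw [hY, mul_assoc, ← map_mul, hαγ, map_natCast, sub_mul]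
      push_cast
      rw [(Nat.cast_commute q U).eq]; abel
    simp only [AddMonoidHom.coe_mulLeft]
    rw [← mul_assoc, e0, sub_mul, ← zsmul_eq_mul, mul_assoc, mul_assoc, ← nsmul_eq_mul]
    refine sub_mem (zsmul_mem (Fil_gen Y (hi.trans (Nat.le_succ j)) hw) _)
      (nsmul_mem (Fil_mono Y (Nat.succ_le_succ hi) (Fil_left Y ?_)) _)
    exact DY_mem_FilY hDU hS hp hY hα i hγ hw

end

theorem core_thm {S : Z →+* Z} {U Y : B} {n p σ q : ℕ} {lam : ℤ} {α γ η : Z}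
  (hDU : ∀ z, D z * U = U * D (S z)) (hS : ∀ z ∈ O, S z ∈ O)
  (hp : Odd p) (hY : (p : B) * Y = ((lam : B) - U) * D α) (hα : α ∈ O) (hγ : γ ∈ O)
  (hq : Odd q) (hαγ : α * γ = q) (hn : Odd n) (hσ : Odd σ) (hU : U ^ n = σ)
  (hη : η ∈ O)
  (hspan : ∀ z ∈ O, ∃ c : Fin n → ℤ, z = ∑ s : Fin n, c s • S^[s] η)
  (hsum : ∑ s : Fin n, S^[s] η = -1)
  (hdual : ∀ j, 0 < j → j < n → ∑ s : Fin n, S^[s] η * (S^[s] η - S^[j] (S^[s] η)) = p)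
  (k : ℕ) (hk : 2 ≤ k) (C : Matrix (Fin k) (Fin k) B)
  (hC : ∀ i j, ∃ c : Fin n → Fin n → ℤ, C i j = ∑ i : Fin n, ∑ s : Fin n,
        c i s • (Y ^ (i : ℕ) * D (S^[s] η))) :
    ∃ (m : ℕ) (A : Fin m → Matrix (Fin k) (Fin k) B),
      (∀ t i j, ∃ c : Fin n → Fin n → ℤ, A t i j = ∑ i : Fin n, ∑ s : Fin n,
        c i s • (Y ^ (i : ℕ) * D (S^[s] η))) ∧ C = ∑ t, A t ^ 2 := by
  have hn0 : 0 < n := hn.pos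
  let I : AddSubgroup B :=
    { carrier := {x | ∃ c : Fin n → Fin n → ℤ, x = ∑ i : Fin n, ∑ s : Fin n,
        c i s • (Y ^ (i : ℕ) * D (S^[s] η))}
      add_mem' := by
        rintro _ _ ⟨c, rfl⟩ ⟨d, rfl⟩
        exact ⟨c + d, by simp [add_smul, Finset.sum_add_distrib]⟩
      zero_mem' := ⟨0, by simp⟩
      neg_mem' := by
        rintro _ ⟨c, rfl⟩
        exact ⟨-c, by simp⟩ }
  have hIgen : ∀ j, j < n → ∀ z ∈ O, Y ^ j * D z ∈ I := by
    intro j hj z hz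
    obtain ⟨c, rfl⟩ := hspan z hz
    refine ⟨fun i s => if i = ⟨j, hj⟩ then c s else 0, ?_⟩
    symm
    rw [Finset.sum_eq_single (⟨j, hj⟩ : Fin n)]
    · simp only [if_true, map_sum, Finset.mul_sum, map_zsmul, mul_smul_comm]
    · intro b _ hb
      simp [hb]
    · simp
  have h1 : (1 : B) ∈ I := by
    have := hIgen 0 hn0 1 (one_mem _)
    simpa using this
  have hFI : ∀ j, j < n → ∀ x, x ∈ Fil D O Y j → x ∈ satO I := by
    intro j hj x hx
    refine Fil_map (AddMonoidHom.id B) Y j I (fun i hi z hz => ?_) hx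
    exact le_satO (hIgen i (lt_of_le_of_lt hi hj) z hz)
  have hUI : ∀ j, j < n → ∀ z ∈ O, U ^ j * D z ∈ satO I := fun j hj z hz =>
    hFI j hj _ (U_mem_FilY hDU hS hp hY hα hγ hq hαγ j hz)
  have hDI : ∀ z ∈ O, D z ∈ satO I := fun z hz => by simpa using hUI 0 hn0 z hz
  set G := Gsub k hk I h1 with hG
  -- degree zero
  have hD1 : ∀ z ∈ O, D z - D (S z) ∈ satO G := by
    intro z hz
    refine satO_of_oddN hσ ?_
    have e1 : U * (U ^ (n - 1) * D z) = (σ : B) * D z := by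
      rw [← mul_assoc, ← pow_succ', Nat.sub_add_cancel hn0, hU]
    have e2 : (U ^ (n - 1) * D z) * U = (σ : B) * D (S z) := by
      rw [mul_assoc, hDU, ← mul_assoc, ← pow_succ, Nat.sub_add_cancel hn0, hU]
    rw [mul_sub, ← e1, ← e2]
    rcases Nat.lt_or_ge 1 n with h | h
    · refine comm_mem_satG hk h1 ?_ (hUI _ (by omega) z hz) ?_ ?_
      · simpa using hUI 1 h 1 (one_mem _)
      · rw [e1, ← nsmul_eq_mul]; exact nsmul_mem (hDI z hz) _
      · rw [e2, ← nsmul_eq_mul]; exact nsmul_mem (hDI _ (hS z hz)) _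
    · have : n = 1 := by omega
      subst this
      have hUU : U = (σ : B) := by simpa using hU
      have : U * (U ^ (1 - 1) * D z) - U ^ (1 - 1) * D z * U = 0 := by
        simp [hUU, (Nat.cast_commute σ (D z)).eq]
      rw [this]; exact zero_mem _
  have hD2 : ∀ s : ℕ, D η - D (S^[s] η) ∈ satO G := by
    intro s
    induction s with
    | zero => simp
    | succ s ih =>
      have := add_mem ih (hD1 _ (S_iter hS s hη))
      rw [Function.iterate_succ_apply']
      simpa using this
  have hDη : D η ∈ satO G := by
    refine satO_of_oddN hn ?_
    have h3 : ∑ s : Fin n, (D η - D (S^[s] η)) ∈ satO G := sum_mem fun s _ => hD2 s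
    rw [Finset.sum_sub_distrib, ← map_sum D (fun s : Fin n => S^[s] η), hsum] at h3
    simp only [Finset.sum_const, Finset.card_univ, Fintype.card_fin, map_neg, map_one,
      nsmul_eq_mul] at h3
    have := sub_mem h3 (le_satO (one_mem_G hk h1))
    simpa using this
  have hD3 : ∀ z ∈ O, D z ∈ satO G := by
    intro z hz
    obtain ⟨c, rfl⟩ := hspan z hz
    rw [map_sum]
    refine sum_mem fun s _ => ?_
    rw [map_zsmul]
    refine zsmul_mem ?_ _
    have := sub_mem hDη (hD2 s)
    simpa using this
  have hU3 : ∀ j, j < n → ∀ z ∈ O, U ^ j * D z ∈ satO G := by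
    intro j hj z hz
    rcases Nat.eq_zero_or_pos j with rfl | hj0
    · simpa using hD3 z hz
    refine satO_of_oddN hp ?_
    have e : (p : B) * (U ^ j * D z) = ∑ s : Fin n,
        ((U ^ j * D (z * S^[s] η)) * D (S^[s] η) - D (S^[s] η) * (U ^ j * D (z * S^[s] η))) := by
      have e1 : ∀ s : Fin n, ((U ^ j * D (z * S^[s] η)) * D (S^[s] η)
          - D (S^[s] η) * (U ^ j * D (z * S^[s] η)))
          = U ^ j * D (z * (S^[s] η * (S^[s] η - S^[j] (S^[s] η)))) := by
        intro s
        rw [← mul_assoc (D _), DUpow hDU, mul_assoc, mul_assoc, ← map_mul, ← map_mul, ← mul_sub,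
          ← map_sub]
        congr 2; ring
      rw [Finset.sum_congr rfl fun s _ => e1 s, ← Finset.mul_sum, ← map_sum, ← Finset.mul_sum,
        hdual j hj0 hj, map_mul, map_natCast,
        (Nat.cast_commute p (U ^ j * D z)).eq, mul_assoc]
    rw [e]
    refine sum_mem fun s _ => ?_
    have hs := S_iter hS s hη
    refine comm_mem_satG hk h1 (hUI j hj _ (mul_mem hz hs)) (hDI _ hs) ?_ ?_
    · rw [mul_assoc, ← map_mul]; exact hUI j hj _ (mul_mem (mul_mem hz hs) hs)
    · rw [← mul_assoc, DUpow hDU, mul_assoc, ← map_mul]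
      exact hUI j hj _ (mul_mem (S_iter hS j hs) (mul_mem hz hs))
  have hIG : ∀ x ∈ I, x ∈ G := by
    intro x hx
    have hx' : x ∈ satO G := by
      obtain ⟨c, rfl⟩ := hx
      refine sum_mem fun i _ => sum_mem fun s _ => zsmul_mem ?_ _
      exact Fil_map (AddMonoidHom.id B) U i G (fun j hj z hz =>
        hU3 j (lt_of_le_of_lt hj i.2) z hz)
          (Y_mem_FilU hDU hS hp hY hα i (S_iter hS s hη))
    obtain ⟨r, hr, h⟩ := hx'
    exact odd_mem_G hk h1 hr hx h
  exact SSq_exists (all_of_G hk h1 hIG C hC)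

end core

open Polynomial in
lemma relation_const {p : ℕ} [hp : Fact p.Prime] {ζ : ℂ} (hζ : IsPrimitiveRoot ζ p)
    (d : ZMod p → ℤ) (h : ∑ a : ZMod p, (d a : ℂ) * ζ ^ a.val = 0) (a : ZMod p) : d a = d 0 := by
  have hp0 : 0 < p := hp.out.pos
  let P : ℚ[X] := ∑ i ∈ Finset.range p, C ((d (i : ZMod p) : ℚ) - d ((p - 1 : ℕ) : ZMod p)) * X ^ i
  have key : ∀ F : ZMod p → ℂ, ∑ a : ZMod p, F a = ∑ i ∈ Finset.range p, F (i : ZMod p) := by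
    intro F
    refine Finset.sum_nbij' (fun a => a.val) (fun i => (i : ZMod p)) ?_ ?_ ?_ ?_ ?_
    · intro a _; simpa using ZMod.val_lt a
    · simp
    · simp
    · intro i hi; exact ZMod.val_cast_of_lt (by simpa using hi)
    · simp
  have hP0 : aeval ζ P = 0 := by
    simp only [P, map_sum, map_mul, aeval_C, map_pow, aeval_X]
    rw [key] at h
    simp only [map_sub, sub_mul, Finset.sum_sub_distrib]
    rw [← Finset.mul_sum, hζ.geom_sum_eq_zero hp.out.one_lt, mul_zero, sub_zero]
    rw [← h]
    refine Finset.sum_congr rfl fun i hi => ?_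
    rw [ZMod.val_cast_of_lt (by simpa using hi)]
    simp
  have hdeg : P.natDegree < p - 1 ∨ P = 0 := by
    by_cases hP : P = 0
    · exact Or.inr hP
    left
    have : P.degree < (p - 1 : ℕ) := by
      have e : P = ∑ i ∈ Finset.range (p - 1),
          C ((d (i : ZMod p) : ℚ) - d ((p - 1 : ℕ) : ZMod p)) * X ^ i := by
        have hr : Finset.range p = Finset.range ((p - 1) + 1) := by
          congr 1; omega
        simp only [P]
        rw [hr, Finset.sum_range_succ]
        simp
      rw [e]
      refine (Polynomial.degree_sum_le _ _).trans_lt ?_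
      rw [Finset.sup_lt_iff (WithBot.bot_lt_coe _)]
      intro i hi
      refine (degree_C_mul_X_pow_le _ _).trans_lt ?_
      exact_mod_cast Finset.mem_range.mp hi
    exact (natDegree_lt_iff_degree_lt hP).mpr this
  have hP : P = 0 := by
    rcases hdeg with h1 | h1
    · by_contra hne
      have hdvd := minpoly.dvd ℚ ζ hP0
      rw [← cyclotomic_eq_minpoly_rat hζ hp0] at hdvd
      have := natDegree_le_of_dvd hdvd hne
      rw [natDegree_cyclotomic, Nat.totient_prime hp.out] at this
      omega
    · exact h1
  have hall : ∀ i < p, d (i : ZMod p) = d ((p - 1 : ℕ) : ZMod p) := by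
    intro i hi
    have := congrArg (fun Q => coeff Q i) hP
    simp only [P, finsetSum_coeff, coeff_C_mul, coeff_X_pow, coeff_zero] at this
    rw [Finset.sum_eq_single i (fun b _ hb => by simp [hb.symm]) (by simp [hi])] at this
    simp only [if_true, mul_one] at this
    exact_mod_cast sub_eq_zero.mp this
  have h1 := hall a.val (ZMod.val_lt a)
  have h0 := hall 0 hp0
  simp only [ZMod.natCast_val, ZMod.cast_id', id, Nat.cast_zero] at h1 h0
  rw [h1, h0]

section nt
variable {n p h : ℕ} [hp : Fact p.Prime] {G : ZMod p}

/-- the subgroup of order h -/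
def Hs (p h : ℕ) [Fact p.Prime] : Finset (ZMod p) := Finset.univ.filter (fun x => x ^ h = 1)

lemma mem_Hs {x : ZMod p} : x ∈ Hs p h ↔ x ^ h = 1 := by simp [Hs]

lemma Hs_ne (h0 : h ≠ 0) {x : ZMod p} (hx : x ∈ Hs p h) : x ≠ 0 := by
  rintro rfl; rw [mem_Hs, zero_pow h0] at hx; exact zero_ne_one hx

lemma exists_pow (hG : orderOf G = p - 1) {x : ZMod p} (hx : x ≠ 0) : ∃ i < p - 1, G ^ i = x := by
  have hpr : IsPrimitiveRoot G (p - 1) := hG ▸ IsPrimitiveRoot.orderOf G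
  have := hp.out.two_le
  haveI : NeZero (p - 1) := ⟨by omega⟩
  exact hpr.eq_pow_of_pow_eq_one (ZMod.pow_card_sub_one_eq_one hx)

lemma pow_inj_lt (hG : orderOf G = p - 1) {i j : ℕ} (hi : i < p - 1) (hj : j < p - 1)
    (h : G ^ i = G ^ j) : i = j :=
  pow_injOn_Iio_orderOf (by simpa [hG] using hi) (by simpa [hG] using hj) h

variable (hph : p = n * h + 1) (hG : orderOf G = p - 1) (h0 : h ≠ 0) (n0 : n ≠ 0)
include hph hG h0

lemma G_ne : G ≠ 0 := by
  rintro rfl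
  have := pow_orderOf_eq_one (0 : ZMod p)
  rw [hG] at this
  have hp2 := hp.out.two_le
  rw [zero_pow (by omega)] at this
  exact zero_ne_one this

lemma pow_mem_Hs_iff (m : ℕ) : G ^ m ∈ Hs p h ↔ n ∣ m := by
  rw [mem_Hs, ← pow_mul, ← orderOf_dvd_iff_pow_eq_one, hG, hph, Nat.add_sub_cancel]
  exact Nat.mul_dvd_mul_iff_right (Nat.pos_of_ne_zero h0)

include n0

lemma bij_Hs : Set.BijOn (fun r => G ^ (n * r)) (Finset.range h : Set ℕ) (Hs p h : Set (ZMod p)) := by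
  have n1 := Nat.pos_of_ne_zero n0
  refine ⟨?_, ?_, ?_⟩
  · intro r _
    exact (pow_mem_Hs_iff hph hG h0 _).mpr (dvd_mul_right _ _)
  · intro r hr t ht e
    simp only [Finset.coe_range, Set.mem_Iio] at hr ht
    have := pow_inj_lt hG (i := n * r) (j := n * t)
      (by rw [hph]; simpa using Nat.mul_lt_mul_of_pos_left hr n1)
      (by rw [hph]; simpa using Nat.mul_lt_mul_of_pos_left ht n1) e
    exact Nat.eq_of_mul_eq_mul_left n1 this
  · intro x hx
    obtain ⟨i, hi, rfl⟩ := exists_pow hG (Hs_ne h0 hx)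
    obtain ⟨r, rfl⟩ := (pow_mem_Hs_iff hph hG h0 _).mp hx
    refine ⟨r, ?_, rfl⟩
    rw [hph] at hi
    simp only [Nat.add_sub_cancel] at hi
    simpa using Nat.lt_of_mul_lt_mul_left hi

lemma sum_Hs (f : ZMod p → ℂ) : ∑ r ∈ Finset.range h, f (G ^ (n * r)) = ∑ x ∈ Hs p h, f x :=
  have b := bij_Hs hph hG h0 n0
  Finset.sum_nbij _ b.mapsTo b.injOn b.surjOn (fun _ _ => rfl)

lemma prod_Hs (f : ZMod p → ℂ) : ∏ r ∈ Finset.range h, f (G ^ (n * r)) = ∏ x ∈ Hs p h, f x :=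
  have b := bij_Hs hph hG h0 n0
  Finset.prod_nbij _ b.mapsTo b.injOn b.surjOn (fun _ _ => rfl)

lemma sum_cosets (f : ZMod p → ℂ) :
    ∑ s ∈ Finset.range n, ∑ x ∈ Hs p h, f (x * G ^ s) = ∑ a ∈ Finset.univ.erase (0 : ZMod p), f a := by
  have n1 := Nat.pos_of_ne_zero n0
  have hlt : ∀ s < n, ∀ r < h, n * r + s < p - 1 := by
    intro s hs r hr
    rw [hph, Nat.add_sub_cancel]
    calc n * r + s < n * r + n := by omega
      _ = n * (r + 1) := by ring
      _ ≤ n * h := Nat.mul_le_mul_left _ hr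
  have : ∀ s ∈ Finset.range n, ∑ x ∈ Hs p h, f (x * G ^ s)
      = ∑ r ∈ Finset.range h, f (G ^ (n * r + s)) := by
    intro s _
    rw [← sum_Hs hph hG h0 n0 (fun x => f (x * G ^ s))]
    simp [pow_add]
  rw [Finset.sum_congr rfl this, ← Finset.sum_product']
  refine Finset.sum_nbij (fun x => G ^ (n * x.2 + x.1)) ?_ ?_ ?_ (fun _ _ => rfl)
  · intro x _
    simp [G_ne hph hG h0]
  · rintro ⟨s, r⟩ hx ⟨s', r'⟩ hx' e
    simp only [Finset.coe_product, Finset.coe_range, Set.mem_prod, Set.mem_Iio] at hx hx'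
    have e := pow_inj_lt hG (hlt s hx.1 r hx.2) (hlt s' hx'.1 r' hx'.2) e
    have e1 : s = s' := by
      have := congrArg (· % n) e
      simpa [Nat.mod_eq_of_lt hx.1, Nat.mod_eq_of_lt hx'.1] using this
    subst e1
    have : r = r' := Nat.eq_of_mul_eq_mul_left n1 (by omega)
    rw [this]
  · intro a ha
    obtain ⟨i, hi, rfl⟩ := exists_pow hG (x := a) (by simpa using ha)
    refine ⟨(i % n, i / n), ?_, ?_⟩
    · simp only [Finset.coe_product, Finset.coe_range, Set.mem_prod, Set.mem_Iio]
      refine ⟨Nat.mod_lt _ n1, ?_⟩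
      rw [hph, Nat.add_sub_cancel] at hi
      exact Nat.div_lt_of_lt_mul hi
    · simp only [Nat.div_add_mod]

omit hph hG n0 in
lemma Hs_mul_sum (f : ZMod p → ℂ) {u : ZMod p} (hu : u ∈ Hs p h) :
    ∑ x ∈ Hs p h, f (u * x) = ∑ x ∈ Hs p h, f x := by
  have hu0 := Hs_ne h0 hu
  have hu1 := mem_Hs.mp hu
  refine Finset.sum_nbij' (fun x => u * x) (fun x => u⁻¹ * x) ?_ ?_ ?_ ?_ (fun _ _ => rfl)
  · intro x hx; simp only [mem_Hs] at *; rw [mul_pow, hu1, hx, one_mul]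
  · intro x hx; simp only [mem_Hs] at *; rw [mul_pow, inv_pow, hu1, hx, inv_one, one_mul]
  · intro x _; simp [hu0]
  · intro x _; simp [hu0]

omit hph hG n0 in
lemma Hs_mul_prod (f : ZMod p → ℂ) {u : ZMod p} (hu : u ∈ Hs p h) :
    ∏ x ∈ Hs p h, f (u * x) = ∏ x ∈ Hs p h, f x := by
  have hu0 := Hs_ne h0 hu
  have hu1 := mem_Hs.mp hu
  refine Finset.prod_nbij' (fun x => u * x) (fun x => u⁻¹ * x) ?_ ?_ ?_ ?_ (fun _ _ => rfl)
  · intro x hx; simp only [mem_Hs] at *; rw [mul_pow, hu1, hx, one_mul]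
  · intro x hx; simp only [mem_Hs] at *; rw [mul_pow, inv_pow, hu1, hx, inv_one, one_mul]
  · intro x _; simp [hu0]
  · intro x _; simp [hu0]

omit hph hG n0 in
lemma Hsc_mul_prod (f : ZMod p → ℂ) {u : ZMod p} (hu : u ∈ Hs p h) :
    ∏ x ∈ (Finset.univ.erase 0) \ Hs p h, f (u * x) = ∏ x ∈ (Finset.univ.erase 0) \ Hs p h, f x := by
  have hu0 := Hs_ne h0 hu
  have hu1 := mem_Hs.mp hu
  refine Finset.prod_nbij' (fun x => u * x) (fun x => u⁻¹ * x) ?_ ?_ ?_ ?_ (fun _ _ => rfl)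
  · intro x hx; simp only [Finset.mem_sdiff, Finset.mem_erase, mem_Hs] at *
    rw [mul_pow, hu1, one_mul]; simpa [hu0] using hx
  · intro x hx; simp only [Finset.mem_sdiff, Finset.mem_erase, mem_Hs] at *
    rw [mul_pow, inv_pow, hu1, inv_one, one_mul]; simpa [hu0] using hx
  · intro x _; simp [hu0]
  · intro x _; simp [hu0]

variable {ψ : AddChar (ZMod p) ℂ} (hψ : ψ.IsPrimitive)

/-- periods -/
noncomputable def per (h : ℕ) (ψ : AddChar (ZMod p) ℂ) (G : ZMod p) (s : ℕ) : ℂ := ∑ x ∈ Hs p h, ψ (x * G ^ s)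

include hψ

omit hph hG h0 n0 in
lemma sum_erase (b : ZMod p) : ∑ a ∈ Finset.univ.erase (0 : ZMod p), ψ (a * b)
    = (if b = 0 then (p : ℂ) else 0) - 1 := by
  have := AddChar.sum_mulShift b hψ
  rw [← Finset.add_sum_erase _ _ (Finset.mem_univ (0 : ZMod p))] at this
  simp only [zero_mul, AddChar.map_zero_eq_one, ZMod.card] at this
  rw [eq_sub_iff_add_eq, add_comm, this]
  split_ifs <;> simp

lemma sum_per : ∑ s ∈ Finset.range n, per h ψ G s = -1 := by
  have := sum_erase hψ 1
  simp only [mul_one, one_ne_zero, if_false, zero_sub] at this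
  rw [← this]
  exact sum_cosets hph hG h0 n0 ψ

lemma sum_per_mul (j : ℕ) : ∑ s ∈ Finset.range n, per h ψ G s * per h ψ G (s + j)
    = ∑ y ∈ Hs p h, ((if 1 + y * G ^ j = 0 then (p : ℂ) else 0) - 1) := by
  have e : ∀ s, per h ψ G s * per h ψ G (s + j) =
      ∑ y ∈ Hs p h, ∑ x ∈ Hs p h, ψ ((x * G ^ s) * (1 + y * G ^ j)) := by
    intro s
    rw [per, per, Finset.sum_mul_sum, Finset.sum_comm' (t' := Hs p h) (s' := fun _ => Hs p h)
      (by simp)]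
    rw [Finset.sum_comm]
    rw [Finset.sum_comm (s := Hs p h) (f := fun y x => ψ ((x * G ^ s) * (1 + y * G ^ j)))]
    refine Finset.sum_congr rfl fun x hx => ?_
    rw [← Hs_mul_sum h0 _ hx]
    refine Finset.sum_congr rfl fun y hy => ?_
    rw [← AddChar.map_add_eq_mul]
    congr 1; rw [pow_add]; ring
  rw [Finset.sum_congr rfl fun s _ => e s, Finset.sum_comm]
  refine Finset.sum_congr rfl fun y _ => ?_
  rw [sum_cosets hph hG h0 n0 (fun a => ψ (a * (1 + y * G ^ j))), sum_erase hψ]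

lemma dual_per (heven : Even h) {j : ℕ} (hj : 0 < j) (hjn : j < n) :
    ∑ s ∈ Finset.range n, per h ψ G s * (per h ψ G s - per h ψ G (s + j)) = p := by
  have a := sum_per_mul hph hG h0 n0 hψ 0
  have b := sum_per_mul hph hG h0 n0 hψ j
  simp only [mul_sub, Finset.sum_sub_distrib]
  simp only [add_zero] at a
  rw [a, b, Finset.sum_sub_distrib, Finset.sum_sub_distrib]
  have hm : (-1 : ZMod p) ∈ Hs p h := mem_Hs.mpr heven.neg_one_pow
  rw [Finset.sum_eq_single (-1) _ (by simp [hm])]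
  · rw [Finset.sum_eq_zero (s := Hs p h) (f := fun y => if 1 + y * G ^ j = 0 then (p : ℂ) else 0)]
    · simp
    · intro y hy
      rw [if_neg]
      intro e
      have : y * G ^ j = -1 := by linear_combination e
      have h2 : G ^ j ∈ Hs p h := by
        have h3 := congrArg (· ^ h) this
        simp only [mul_pow, mem_Hs.mp hy, mem_Hs.mp hm, one_mul] at h3
        exact mem_Hs.mpr h3
      have := Nat.le_of_dvd hj ((pow_mem_Hs_iff hph hG h0 j).mp h2)
      omega
  · intro y _ hy
    rw [if_neg]
    intro e
    apply hy
    rw [pow_zero, mul_one] at e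
    linear_combination e

end nt

section nt2
variable {n p h : ℕ} [hp : Fact p.Prime] {G : ZMod p}

/-- evaluation of group ring elements -/
noncomputable def ev (ψ : AddChar (ZMod p) ℂ) (u : ZMod p) : AddMonoidAlgebra ℤ (ZMod p) →+* ℂ :=
  (AddMonoidAlgebra.lift ℤ ℂ (ZMod p) (ψ.mulShift u).toMonoidHom : _ →ₐ[ℤ] ℂ).toRingHom

lemma ev_single (ψ : AddChar (ZMod p) ℂ) (u a : ZMod p) :
    ev ψ u (AddMonoidAlgebra.single a 1) = ψ (u * a) := by
  have := AddMonoidAlgebra.lift_single (R := ℤ) (ψ.mulShift u).toMonoidHom a 1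
  simpa [ev] using this

lemma ev_apply (ψ : AddChar (ZMod p) ℂ) (u : ZMod p) (f : AddMonoidAlgebra ℤ (ZMod p)) :
    ev ψ u f = ∑ a : ZMod p, (f.coeff a : ℂ) * ψ (u * a) := by
  have := AddMonoidAlgebra.lift_apply (R := ℤ) (ψ.mulShift u).toMonoidHom f
  rw [Finsupp.sum_fintype _ _ (by simp)] at this
  simpa [ev] using this

/-- invariants -/
noncomputable def Oc (ψ : AddChar (ZMod p) ℂ) (u : ZMod p) : Subring ℂ :=
  (RingHom.eqLocus (ev ψ 1) (ev ψ u)).map (ev ψ 1)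

lemma mem_Oc {ψ : AddChar (ZMod p) ℂ} {u : ZMod p} {x : ℂ} (f : AddMonoidAlgebra ℤ (ZMod p))
    (h1 : ev ψ 1 f = x) (h2 : ev ψ u f = x) : x ∈ Oc ψ u :=
  ⟨f, show ev ψ 1 f = ev ψ u f by rw [h1, h2], h1⟩

lemma per_mem_Oc {ψ : AddChar (ZMod p) ℂ} (h0 : h ≠ 0) {u : ZMod p} (hu : u ∈ Hs p h) (s : ℕ) :
    per h ψ G s ∈ Oc ψ u := by
  refine mem_Oc (∑ x ∈ Hs p h, AddMonoidAlgebra.single (x * G ^ s) 1) ?_ ?_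
  · simp only [map_sum, ev_single, one_mul]; rfl
  · simp only [map_sum, ev_single, per]
    rw [← Hs_mul_sum h0 (fun x => ψ (x * G ^ s)) hu]
    simp only [mul_assoc]

lemma beta_mem_Oc {ψ : AddChar (ZMod p) ℂ} (h0 : h ≠ 0) {u : ZMod p} (hu : u ∈ Hs p h) :
    ∏ x ∈ Hs p h, (1 - ψ x) ∈ Oc ψ u := by
  refine mem_Oc (∏ x ∈ Hs p h, (1 - AddMonoidAlgebra.single x 1)) ?_ ?_
  · simp only [map_prod, map_sub, map_one, ev_single, one_mul]
  · simp only [map_prod, map_sub, map_one, ev_single]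
    exact Hs_mul_prod h0 (fun x => 1 - ψ x) hu

lemma gamma_mem_Oc {ψ : AddChar (ZMod p) ℂ} (h0 : h ≠ 0) {u : ZMod p} (hu : u ∈ Hs p h) :
    ∏ x ∈ (Finset.univ.erase 0) \ Hs p h, (1 - ψ x) ∈ Oc ψ u := by
  refine mem_Oc (∏ x ∈ (Finset.univ.erase 0) \ Hs p h, (1 - AddMonoidAlgebra.single x 1)) ?_ ?_
  · simp only [map_prod, map_sub, map_one, ev_single, one_mul]
  · simp only [map_prod, map_sub, map_one, ev_single]
    exact Hsc_mul_prod h0 (fun x => 1 - ψ x) hu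

lemma beta_gamma {ψ : AddChar (ZMod p) ℂ} {ζ : ℂ} (hζ : IsPrimitiveRoot ζ p)
    (hψ : ∀ a, ψ a = ζ ^ a.val) (h0 : h ≠ 0) :
    (∏ x ∈ Hs p h, (1 - ψ x)) * ∏ x ∈ (Finset.univ.erase 0) \ Hs p h, (1 - ψ x) = p := by
  have hsub : Hs p h ⊆ Finset.univ.erase 0 := fun x hx => by simpa using Hs_ne h0 hx
  rw [mul_comm, Finset.prod_sdiff hsub]
  have hp1 := hp.out.pos
  have hpe : p = (p - 1) + 1 := by omega
  have h1 := IsPrimitiveRoot.prod_one_sub_pow_eq_order (n := p - 1) (μ := ζ) (hpe ▸ hζ)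
  have h2 : ((p - 1 : ℕ) : ℂ) + 1 = p := by
    rw [← Nat.cast_succ]; congr 1; omega
  rw [h2] at h1
  rw [← h1]
  refine Finset.prod_nbij' (fun a => a.val - 1) (fun i => ((i + 1 : ℕ) : ZMod p)) ?_ ?_ ?_ ?_ ?_
  · intro a ha
    have := ZMod.val_lt a
    have : a.val ≠ 0 := by simpa using ha
    simp only [Finset.mem_range]; omega
  · intro i hi
    simp only [Finset.mem_range] at hi
    simp only [Finset.mem_erase, Finset.mem_univ, and_true]
    rw [Ne, ZMod.natCast_eq_zero_iff]
    intro hd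
    have := Nat.le_of_dvd (by omega) hd
    omega
  · intro a ha
    have : a.val ≠ 0 := by simpa using ha
    simp only [show a.val - 1 + 1 = a.val by omega, ZMod.natCast_zmod_val]
  · intro i hi
    simp only [Finset.mem_range] at hi
    simp only [ZMod.val_cast_of_lt (show i + 1 < p by omega), Nat.add_sub_cancel]
  · intro a ha
    have : a.val ≠ 0 := by simpa using ha
    rw [hψ, show a.val - 1 + 1 = a.val by omega]

lemma Oc_span (hph : p = n * h + 1) (hG : orderOf G = p - 1) (h0 : h ≠ 0) (n0 : n ≠ 0)
    {ψ : AddChar (ZMod p) ℂ} {ζ : ℂ} (hζ : IsPrimitiveRoot ζ p)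
    (hψ : ∀ a, ψ a = ζ ^ a.val) (hprim : ψ.IsPrimitive) {x : ℂ} (hx : x ∈ Oc ψ (G ^ n)) :
    ∃ c : ℕ → ℤ, x = ∑ s ∈ Finset.range n, (c s : ℂ) * per h ψ G s := by
  obtain ⟨f, hf, rfl⟩ := hx
  have hf : ev ψ 1 f = ev ψ (G ^ n) f := hf
  have hu0 : G ^ n ≠ 0 := pow_ne_zero _ (G_ne hph hG h0)
  have hc : ∀ a, f.coeff (G ^ n * a) = f.coeff a := by
    have e : ev ψ 1 f = ∑ a : ZMod p, (f.coeff (G ^ n * a) : ℂ) * ψ (G ^ n * a) := by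
      rw [ev_apply]
      refine (Fintype.sum_equiv (Equiv.mulLeft₀ (G ^ n) hu0) _ _ fun a => ?_).symm
      simp
    rw [ev_apply ψ (G ^ n)] at hf
    have e2 : ∑ a : ZMod p, ((f.coeff a - f.coeff ((G ^ n)⁻¹ * a) : ℤ) : ℂ) * ζ ^ a.val = 0 := by
      have e3 : ∑ a : ZMod p, (f.coeff ((G ^ n)⁻¹ * a) : ℂ) * ψ a = ev ψ 1 f := by
        rw [hf]
        refine (Fintype.sum_equiv (Equiv.mulLeft₀ (G ^ n) hu0) _ _ fun a => ?_).symm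
        simp [hu0]
      simp only [Int.cast_sub, sub_mul, Finset.sum_sub_distrib, ← hψ]
      rw [e3, ev_apply]; simp
    intro a
    have := relation_const hζ _ e2 (G ^ n * a)
    simp only [mul_zero, sub_self] at this
    rw [inv_mul_cancel_left₀ hu0] at this
    linarith
  have hc2 : ∀ r a, f.coeff (G ^ (n * r) * a) = f.coeff a := by
    intro r a
    induction r with
    | zero => simp
    | succ r ih =>
      rw [Nat.mul_succ, add_comm, pow_add, mul_assoc, hc, ih]
  have hc3 : ∀ y ∈ Hs p h, ∀ a, f.coeff (y * a) = f.coeff a := by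
    intro y hy a
    obtain ⟨r, -, rfl⟩ := (bij_Hs hph hG h0 n0).surjOn hy
    exact hc2 r a
  refine ⟨fun s => f.coeff (G ^ s) - f.coeff 0, ?_⟩
  rw [ev_apply, ← Finset.add_sum_erase _ _ (Finset.mem_univ (0 : ZMod p)),
    ← sum_cosets hph hG h0 n0 (fun a => (f.coeff a : ℂ) * ψ (1 * a))]
  simp only [Int.cast_sub, sub_mul, Finset.sum_sub_distrib, ← Finset.mul_sum]
  rw [sum_per hph hG h0 n0 hprim]
  simp only [mul_zero, AddChar.map_zero_eq_one, one_mul]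
  have : ∀ s, ∑ y ∈ Hs p h, (f.coeff (y * G ^ s) : ℂ) * ψ (y * G ^ s)
      = (f.coeff (G ^ s) : ℂ) * per h ψ G s := by
    intro s
    rw [per, Finset.mul_sum]
    exact Finset.sum_congr rfl fun y hy => by rw [hc3 y hy]
  simp only [this]
  ring

end nt2

section final

lemma Um_pow (n p h g σ : ℕ) (n2 : 2 ≤ n) :
    (Um n p h g σ) ^ n = (σ : Matrix (Fin n) (Fin n) (Zf n p h g)) := by
  have n0 : 0 < n := by omega
  have hstep : ∀ j : ℕ, (hj : j + 1 < n) →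
      (Um n p h g σ).mulVec (Pi.single ⟨j, by omega⟩ 1) = Pi.single ⟨j + 1, hj⟩ 1 := by
    intro j hj
    ext i
    rw [Matrix.mulVec_single_one]
    simp only [Matrix.col_apply, Um, Matrix.of_apply, Pi.single_apply, Fin.ext_iff]
    split_ifs <;> first | rfl | omega
  have hlast : (Um n p h g σ).mulVec (Pi.single ⟨n - 1, by omega⟩ 1)
      = (σ : Zf n p h g) • Pi.single ⟨0, n0⟩ 1 := by
    ext i
    rw [Matrix.mulVec_single_one]
    have := i.2
    simp only [Matrix.col_apply, Um, Matrix.of_apply, Pi.smul_apply, Pi.single_apply, Fin.ext_iff,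
      smul_eq_mul]
    split_ifs <;> first | omega | simp_all
  have hpow : ∀ j : ℕ, (hj : j < n) →
      ((Um n p h g σ) ^ j).mulVec (Pi.single ⟨0, n0⟩ 1) = Pi.single ⟨j, hj⟩ 1 := by
    intro j
    induction j with
    | zero => intro hj; rw [pow_zero, Matrix.one_mulVec]
    | succ j ih =>
      intro hj
      rw [pow_succ', ← Matrix.mulVec_mulVec, ih (by omega), hstep]
  have h0 : ((Um n p h g σ) ^ n).mulVec (Pi.single ⟨0, n0⟩ 1)
      = (σ : Zf n p h g) • Pi.single ⟨0, n0⟩ 1 := by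
    have : (Um n p h g σ) ^ n = (Um n p h g σ) * (Um n p h g σ) ^ (n - 1) := by
      rw [← pow_succ', Nat.sub_add_cancel n0]
    rw [this, ← Matrix.mulVec_mulVec, hpow (n - 1) (by omega), hlast]
  have hall : ∀ j : Fin n, ((Um n p h g σ) ^ n).mulVec (Pi.single j 1)
      = (σ : Zf n p h g) • Pi.single j 1 := by
    intro j
    have e := hpow j j.2
    rw [← e, Matrix.mulVec_mulVec, ← pow_add, add_comm, pow_add, ← Matrix.mulVec_mulVec, h0,
      Matrix.mulVec_smul]
  ext i j
  have := congrFun (hall j) i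
  rw [Matrix.mulVec_single_one] at this
  simp only [Matrix.col_apply] at this
  rw [this]
  simp only [Pi.smul_apply, Pi.single_apply, smul_eq_mul, Matrix.natCast_apply]
  split_ifs <;> simp

/-- `D` as a ring homomorphism -/
def DmHom (n p h g : ℕ) (S : Zf n p h g ≃ₐ[ℚ] Zf n p h g) :
    Zf n p h g →+* Matrix (Fin n) (Fin n) (Zf n p h g) :=
  (Matrix.diagonalRingHom (Fin n) (Zf n p h g)).comp
    (Pi.ringHom fun i : Fin n => ((S ^ (i : ℕ) : Zf n p h g ≃ₐ[ℚ] Zf n p h g) : Zf n p h g →+* Zf n p h g))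

lemma DmHom_apply (n p h g : ℕ) (S : Zf n p h g ≃ₐ[ℚ] Zf n p h g) (z : Zf n p h g) :
    DmHom n p h g S z = Dm n p h g S z := rfl

lemma Dm_Um (n p h g σ : ℕ) (S : Zf n p h g ≃ₐ[ℚ] Zf n p h g) (hSn : S ^ n = 1)
    (z : Zf n p h g) :
    Dm n p h g S z * Um n p h g σ = Um n p h g σ * Dm n p h g S (S z) := by
  ext1 i j
  rw [Dm, Dm, Matrix.diagonal_mul, Matrix.mul_diagonal]
  have e : ∀ m : ℕ, (S ^ m) (S z) = (S ^ (m + 1)) z := by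
    intro m; rw [pow_succ]; rfl
  rw [e]
  simp only [Um, Matrix.of_apply]
  split_ifs with h1 h2
  · rw [h1]; ring
  · have : (j : ℕ) + 1 = n := by have := j.2; omega
    rw [this, hSn, h2.1, pow_zero]; ring
  · ring

lemma iter_eq (n p h g : ℕ) (S : Zf n p h g ≃ₐ[ℚ] Zf n p h g) (s : ℕ) (z : Zf n p h g) :
    (⇑(S : Zf n p h g →+* Zf n p h g))^[s] z = (S ^ s) z := by
  induction s with
  | zero => rfl
  | succ s ih => rw [Function.iterate_succ_apply', ih, pow_succ']; rfl

lemma zetaC_prim (p : ℕ) (hp : p ≠ 0) : IsPrimitiveRoot (zetaC p) p :=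
  Complex.isPrimitiveRoot_exp p hp

end final

/-- If `σ ≡ 1 (mod 2)` and `N_{Z/ℚ}(η) ≡ 1 (mod 2)`, then for every
`k ≥ 2` every `k × k` matrix with entries in the maximal order `𝔪 = I(λ)` is a sum of
squares of `k × k` matrices with entries in `𝔪`. -/
theorem matrices_over_maximal_order_sum_of_squares
    (n p h g σ : ℕ) (lam : ℤ)
    (hn : n.Prime) (hnodd : Odd n)
    (hp : p.Prime)
    (hph : p = n * h + 1)
    (hg : orderOf (g : ZMod p) = p - 1)
    (hσfac : ∃ qs : Finset ℕ, 2 ≤ qs.card ∧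
      (∀ q ∈ qs, q.Prime ∧ ¬ ∃ x : ZMod p, x ^ n = (q : ZMod p)) ∧ σ = ∏ q ∈ qs, q)
    (hσres : ∃ x : ZMod p, x ^ n = (σ : ZMod p))
    (hσcop : Nat.Coprime σ p)
    (hlam : (lam : ZMod p) ^ n = (σ : ZMod p))
    (S : Zf n p h g ≃ₐ[ℚ] Zf n p h g)
    (hS : ∀ s : ℕ, (((S ^ s) (etaZ n p h g) : Zf n p h g) : ℂ) = gaussPeriod n p h g s)
    (β : Zf n p h g)
    (hβ : (β : ℂ) = ∏ r ∈ Finset.range h, (1 - zetaC p ^ (g ^ (n * r))))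
    (hσodd : σ % 2 = 1)
    (hnorm : ∃ N : ℤ, Odd N ∧ Algebra.norm ℚ (etaZ n p h g) = (N : ℚ))
    (k : ℕ) (hk : 2 ≤ k)
    (C : Matrix (Fin k) (Fin k) (Matrix (Fin n) (Fin n) (Zf n p h g)))
    (hC : ∀ i j, C i j ∈ Iorder n p h g σ lam S β) :
    ∃ (m : ℕ) (A : Fin m → Matrix (Fin k) (Fin k) (Matrix (Fin n) (Fin n) (Zf n p h g))),
      (∀ t i j, A t i j ∈ Iorder n p h g σ lam S β) ∧ C = ∑ t, A t ^ 2 := by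
  haveI : Fact p.Prime := ⟨hp⟩
  have hζ := zetaC_prim p hp.ne_zero
  have n0 : n ≠ 0 := hn.ne_zero
  have n2 : 2 ≤ n := hn.two_le
  have h0 : h ≠ 0 := by
    rintro rfl
    apply hp.one_lt.ne'
    simpa using hph
  have hpodd : Odd p := by
    refine hp.odd_of_ne_two ?_
    have := Nat.mul_le_mul n2 (Nat.pos_of_ne_zero h0)
    omega
  have heven : Even h := by
    rcases Nat.even_or_odd h with he | ho
    · exact he
    · exfalso
      have h1 : Odd (n * h) := hnodd.mul ho
      rw [hph] at hpodd
      exact (Nat.not_odd_iff_even.mpr (h1.add_one)) hpodd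
  obtain ⟨G, hGdef⟩ : ∃ G : ZMod p, G = (g : ZMod p) := ⟨_, rfl⟩
  rw [← hGdef] at hg
  let ψ : AddChar (ZMod p) ℂ := AddChar.zmodChar p hζ.pow_eq_one
  have hψ : ∀ a, ψ a = zetaC p ^ a.val := fun a => AddChar.zmodChar_apply _ a
  have hψn : ∀ a : ℕ, ψ a = zetaC p ^ a := fun a => AddChar.zmodChar_apply' _ a
  have hprim : ψ.IsPrimitive := AddChar.zmodChar_primitive_of_primitive_root p hζ
  have hu : G ^ n ∈ Hs p h := (pow_mem_Hs_iff hph hg h0 n).mpr dvd_rfl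
  have hper : ∀ s, gaussPeriod n p h g s = per h ψ G s := by
    intro s
    rw [per, ← sum_Hs hph hg h0 n0 (fun x => ψ (x * G ^ s)), gaussPeriod]
    refine Finset.sum_congr rfl fun r _ => ?_
    rw [← hψn, hGdef, ← pow_add]
    push_cast
    rfl
  have hβ' : (β : ℂ) = ∏ x ∈ Hs p h, (1 - ψ x) := by
    rw [hβ, ← prod_Hs hph hg h0 n0 (fun x => 1 - ψ x)]
    refine Finset.prod_congr rfl fun r _ => ?_
    rw [← hψn, hGdef]
    push_cast
    rfl
  obtain ⟨ι, hι⟩ : ∃ ι : Zf n p h g →+* ℂ, ∀ z, ι z = (z : ℂ) :=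
    ⟨(algebraMap (Zf n p h g) ℂ), fun z => rfl⟩
  have hinj : Function.Injective ι := ι.injective
  set η := etaZ n p h g with hηdef
  have hSper : ∀ s, ι ((S ^ s) η) = per h ψ G s := fun s => by rw [hι, hS s, hper]
  let O : Subring (Zf n p h g) := (Oc ψ (G ^ n)).comap ι
  have hηO : ∀ s, (S ^ s) η ∈ O := fun s => by
    change ι ((S ^ s) η) ∈ Oc ψ (G ^ n)
    rw [hSper]; exact per_mem_Oc h0 hu s
  have hspanC : ∀ x ∈ Oc ψ (G ^ n), ∃ c : ℕ → ℤ,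
      x = ι (∑ s : Fin n, c s • (S ^ (s : ℕ)) η) := by
    intro x hx
    obtain ⟨c, rfl⟩ := Oc_span hph hg h0 n0 hζ hψ hprim hx
    refine ⟨c, ?_⟩
    rw [map_sum, ← Fin.sum_univ_eq_sum_range (fun s => (c s : ℂ) * per h ψ G s)]
    refine Finset.sum_congr rfl fun s _ => ?_
    rw [map_zsmul, hSper, zsmul_eq_mul]
  have hspan : ∀ z ∈ O, ∃ c : ℕ → ℤ, z = ∑ s : Fin n, c s • (S ^ (s : ℕ)) η := by
    intro z hz
    obtain ⟨c, hc⟩ := hspanC (ι z) hz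
    exact ⟨c, hinj hc⟩
  have hSO : ∀ z ∈ O, S z ∈ O := by
    intro z hz
    obtain ⟨c, rfl⟩ := hspan z hz
    rw [map_sum]
    refine sum_mem fun s _ => ?_
    rw [map_zsmul]
    refine zsmul_mem ?_ _
    have : S ((S ^ (s : ℕ)) η) = (S ^ ((s : ℕ) + 1)) η := by rw [pow_succ']; rfl
    rw [this]; exact hηO _
  have hSn : S ^ n = 1 := by
    have e : (S ^ n) η = η := by
      apply hinj
      have a := hSper 0
      rw [pow_zero] at a
      change ι η = _ at a
      rw [hSper, a, per, per, ← Hs_mul_sum h0 (fun x => ψ (x * G ^ 0)) hu]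
      refine Finset.sum_congr rfl fun x _ => ?_
      rw [pow_zero, mul_one, mul_comm]
    have key : ∀ x : ℂ, ∀ hx : x ∈ Zf n p h g, (S ^ n) ⟨x, hx⟩ = ⟨x, hx⟩ := by
      intro x hx
      induction hx using IntermediateField.adjoin_induction with
      | mem x hx =>
        have : x = gaussPeriod n p h g 0 := hx
        subst this
        exact e
      | algebraMap q => exact (S ^ n).commutes q
      | add x y hx hy a b =>
        have : (⟨x + y, add_mem hx hy⟩ : Zf n p h g) = ⟨x, hx⟩ + ⟨y, hy⟩ := rfl
        exact (congrArg (S ^ n) this).trans ((map_add _ _ _).trans (by rw [a, b]; rfl))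
      | inv x hx a =>
        have : (⟨x⁻¹, inv_mem hx⟩ : Zf n p h g) = (⟨x, hx⟩)⁻¹ := rfl
        exact (congrArg (S ^ n) this).trans ((map_inv₀ _ _).trans (by rw [a]; rfl))
      | mul x y hx hy a b =>
        have : (⟨x * y, mul_mem hx hy⟩ : Zf n p h g) = ⟨x, hx⟩ * ⟨y, hy⟩ := rfl
        exact (congrArg (S ^ n) this).trans ((map_mul _ _ _).trans (by rw [a, b]; rfl))
    ext1 z
    exact key z.1 z.2
  have hβO : β ∈ O := by
    change ι β ∈ Oc ψ (G ^ n)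
    rw [hι, hβ']; exact beta_mem_Oc h0 hu
  obtain ⟨γ, hγO, hβγ⟩ : ∃ γ ∈ O, β * γ = (p : Zf n p h g) := by
    have hm := gamma_mem_Oc (ψ := ψ) h0 hu
    obtain ⟨c, hc⟩ := hspanC _ hm
    refine ⟨∑ s : Fin n, c s • (S ^ (s : ℕ)) η, ?_, ?_⟩
    · change ι _ ∈ Oc ψ (G ^ n)
      rw [← hc]; exact hm
    · apply hinj
      rw [map_mul, ← hc, hι, hβ', map_natCast]
      exact beta_gamma hζ hψ h0
  have hsum : ∑ s : Fin n, (S ^ (s : ℕ)) η = -1 := by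
    apply hinj
    rw [map_sum, map_neg, map_one, ← sum_per hph hg h0 n0 hprim,
      ← Fin.sum_univ_eq_sum_range (fun s => per h ψ G s)]
    exact Finset.sum_congr rfl fun s _ => hSper s
  have hdual : ∀ j, 0 < j → j < n → ∑ s : Fin n, (S ^ (s : ℕ)) η *
      ((S ^ (s : ℕ)) η - (S ^ j) ((S ^ (s : ℕ)) η)) = p := by
    intro j hj hjn
    apply hinj
    rw [map_sum, map_natCast, ← dual_per hph hg h0 n0 hprim heven hj hjn,
      ← Fin.sum_univ_eq_sum_range (fun s => per h ψ G s * (per h ψ G s - per h ψ G (s + j)))]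
    refine Finset.sum_congr rfl fun s _ => ?_
    have e : (S ^ j) ((S ^ (s : ℕ)) η) = (S ^ ((s : ℕ) + j)) η := by
      rw [add_comm, pow_add]; rfl
    rw [e, map_mul, map_sub, hSper, hSper]
  have hY : (p : Matrix (Fin n) (Fin n) (Zf n p h g)) * Ym n p h g σ lam S β
      = ((lam : Matrix (Fin n) (Fin n) (Zf n p h g)) - Um n p h g σ)
        * DmHom n p h g S (β ^ (n - 1)) := by
    have hp0 : (p : Zf n p h g) ≠ 0 := Nat.cast_ne_zero.mpr hp.ne_zero
    have e1 : (p : Matrix (Fin n) (Fin n) (Zf n p h g)) = (p : Zf n p h g) • 1 := by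
      rw [Matrix.smul_one_eq_diagonal, Matrix.diagonal_natCast]
    have e2 : (lam : Matrix (Fin n) (Fin n) (Zf n p h g)) = (lam : Zf n p h g) • 1 := by
      rw [Matrix.smul_one_eq_diagonal, Matrix.diagonal_intCast]
    rw [Ym, DmHom_apply, e1, e2, smul_mul_assoc, one_mul, smul_smul, mul_inv_cancel₀ hp0, one_smul]
  have hfin := core_thm (D := DmHom n p h g S) (O := O) (S := (S : Zf n p h g →+* Zf n p h g))
    (U := Um n p h g σ) (Y := Ym n p h g σ lam S β) (n := n) (p := p) (σ := σ)
    (q := p ^ (n - 1)) (lam := lam) (α := β ^ (n - 1)) (γ := γ ^ (n - 1)) (η := η)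
    (fun z => Dm_Um n p h g σ S hSn z) hSO hpodd hY (pow_mem hβO _) (pow_mem hγO _)
    hpodd.pow (by rw [← mul_pow, hβγ]; push_cast; rfl) hnodd (Nat.odd_iff.mpr hσodd)
    (Um_pow n p h g σ n2) (hηO 0)
    (fun z hz => by
      obtain ⟨c, hc⟩ := hspan z hz
      exact ⟨fun s => c s, by simpa only [iter_eq] using hc⟩)
    (by simpa only [iter_eq] using hsum)
    (by simpa only [iter_eq] using hdual) k hk C
    (fun i j => by
      obtain ⟨c, hc⟩ := hC i j
      exact ⟨c, by simpa only [iter_eq, DmHom_apply] using hc⟩)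
  obtain ⟨m, A, hA, hCA⟩ := hfin
  refine ⟨m, A, fun t i j => ?_, hCA⟩
  obtain ⟨c, hc⟩ := hA t i j
  exact ⟨c, by simpa only [iter_eq, DmHom_apply] using hc⟩

end
end
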